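/- Let H(x) = tanh(x/√2), Y₁(x) = 2^(-3/4)·√3·tanh(x/√2)·sech(x/√2), f(x) = (3/2)·( H(x)·Y₁(x)² - (∫_ℝ H(y)·Y₁(y)³ dy)·Y₁(x) ), ψ(x) = 8√2·tanh(x/(8√2)), ζ(x) = sech(x/(8√2)), Z₁(x) = Y₁(x)·cosh(x/(8√2)), V(x) = (1/256)·sech²(x/(8√2)) + 24·tanh(x/(8√2))·cosh²(x/(8√2))·tanh(x/√2)·sech²(x/√2), and k(x) = e^(2ix)·( 1 + (1/2)·sech²(x/√2) + i·√2·tanh(x/√2) ). Assume ∫_ℝ ψ'(x)·f(x)·Im(k(x)) dx ≠ 0 and set a = -( ∫_ℝ (ψ(x)·f'(x) + (1/2)·ψ'(x)·f(x))·Im(k(x)) dx ) / ( ∫_ℝ ψ'(x)·f(x)·Im(k(x)) dx ). Let g : ℝ → ℝ be an odd Schwartz function satisfying -g''(x) - 4·g(x) - 3·sech²(x/√2)·g(x) = ψ(x)·f'(x) + (a + 1/2)·ψ'(x)·f(x) for all x. Then there exists κ > 0 such that for every real number α and every odd differentiable function w : ℝ → ℝ with w and w' square integrable and ∫_ℝ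 w(x)·Z₁(x) dx = 0, one has ∫_ℝ ( w'(x)² - V(x)·w(x)² ) dx + a·α·∫_ℝ w(x)·ζ(x)·f(x) dx + α²·∫_ℝ f(x)·g(x) dx ≥ κ·( α² + ∫_ℝ w'(x)² dx ). -/

import Mathlib

open MeasureTheory

noncomputable def sech (x : ℝ) : ℝ := 1 / Real.cosh x

noncomputable def Hkink (x : ℝ) : ℝ := Real.tanh (x / Real.sqrt 2)

noncomputable def Y1 (x : ℝ) : ℝ :=
  (2 : ℝ) ^ (-(3 : ℝ) / 4) * Real.sqrt 3 * Real.tanh (x / Real.sqrt 2) * sech (x / Real.sqrt 2)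

noncomputable def fsrc (x : ℝ) : ℝ :=
  (3 / 2) * (Hkink x * (Y1 x) ^ 2 - (∫ y : ℝ, Hkink y * (Y1 y) ^ 3) * Y1 x)

noncomputable def psiV (x : ℝ) : ℝ := 8 * Real.sqrt 2 * Real.tanh (x / (8 * Real.sqrt 2))

noncomputable def zetaV (x : ℝ) : ℝ := sech (x / (8 * Real.sqrt 2))

noncomputable def Z1 (x : ℝ) : ℝ := Y1 x * Real.cosh (x / (8 * Real.sqrt 2))

noncomputable def Vpot (x : ℝ) : ℝ :=
  (1 / 256) * sech (x / (8 * Real.sqrt 2)) ^ 2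
    + 24 * Real.tanh (x / (8 * Real.sqrt 2)) * Real.cosh (x / (8 * Real.sqrt 2)) ^ 2
      * Real.tanh (x / Real.sqrt 2) * sech (x / Real.sqrt 2) ^ 2

noncomputable def kJost (x : ℝ) : ℂ :=
  Complex.exp (2 * Complex.I * (x : ℂ)) *
    (1 + ((1 / 2 * sech (x / Real.sqrt 2) ^ 2 : ℝ) : ℂ)
      + Complex.I * (Real.sqrt 2 : ℂ) * ((Real.tanh (x / Real.sqrt 2) : ℝ) : ℂ))

/-!
In the variable `X = tanh (x / (8√2))` the kink, its derivatives and all the weights are rational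
functions, so an inequality between them is the positivity of an integer polynomial on an interval.
It is certified by a Möbius map from `[0, ∞)` onto the interval that makes all coefficients
nonnegative.

For the Virial form, a trial function `h` with `h'' + V h ≤ Z`, where `Z` is a multiple of `Z₁`,
and a positive function controlling what is left after projecting along `h` complete `w'² - V w²` to
a square. The orthogonality `∫ w Z₁ = 0` makes the projection harmless, as with a Lagrange
multiplier. There is enough room to keep `∫ w'² / 50 + 3 / 5 ∫ sech (x / √2) w²`.

For `a` and `g`, the Wronskian of a decaying solution with the Jost function `k` turns a pointwise
bound on the right-hand side into one on the solution. Testing against `Im k`, which vanishes at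
`0`, pins `a` down near `0.68725`, and comparison with an explicit approximate solution then bounds
`∫ f g` from below. The cross term `a α ∫ w ζ f` is absorbed into the two diagonal terms by AM-GM
with the weight `sech (x / √2)`.
-/

open Filter Set Topology

/-- Integer polynomials as lists of coefficients, constant term first, on which the kernel can
compute. -/
abbrev CoeffList := List ℤ

namespace CoeffList

/-- The value of the polynomial at a real number (Horner's scheme). -/
noncomputable def eval (p : CoeffList) (x : ℝ) : ℝ :=
  p.foldr (fun c r => c + x * r) 0

/-- The sum of two polynomials. -/
def add : CoeffList → CoeffList → CoeffList
  | [], q => q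
  | p, [] => p
  | a :: p, b :: q => (a + b) :: add p q

/-- The product of two polynomials. -/
def mul : CoeffList → CoeffList → CoeffList
  | [], _ => []
  | _, [] => []
  | a :: p, q => add (q.map (a * ·)) (0 :: mul p q)

/-- The powers of a polynomial. -/
def pow (p : CoeffList) : ℕ → CoeffList
  | 0 => [1]
  | n + 1 => mul p (pow p n)

/-- The derivative of a polynomial. -/
def derivative : CoeffList → CoeffList
  | [] => []
  | _ :: p => add p (0 :: derivative p)

/-- The coefficients in `y` of `(b + d y) ^ n` and `(b + d y) ^ n * p ((a + c y) / (b + d y))`,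
where `n = p.length`. -/
def moebius (a b c d : ℤ) : CoeffList → CoeffList × CoeffList
  | [] => ([1], [])
  | k :: p =>
    let (w, r) := moebius a b c d p
    let w' := mul [b, d] w
    (w', add (w'.map (k * ·)) (mul [a, c] r))

/-- A computable sufficient condition for `0 ≤ p` on `[l, u)`: the Möbius map from `[0, ∞)` onto
`[l, u)` turns `p` into a polynomial with nonnegative coefficients, up to a positive factor. -/
def MoebiusNonneg (p : CoeffList) (l u : ℚ) : Prop :=
  ∀ k ∈ (moebius l.num l.den u.num u.den p).2, 0 ≤ k

instance (p : CoeffList) (l u : ℚ) : Decidable (p.MoebiusNonneg l u) :=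
  inferInstanceAs (Decidable (∀ k ∈ (moebius l.num l.den u.num u.den p).2, 0 ≤ k))

/-- `MoebiusNonneg` on each of the pieces into which `ms` divides `[l, u)`. -/
def CertNonneg (p : CoeffList) (l : ℚ) : List ℚ → ℚ → Prop
  | [], u => p.MoebiusNonneg l u
  | m :: ms, u => p.MoebiusNonneg l m ∧ CertNonneg p m ms u

instance CertNonneg.decidable (p : CoeffList) : ∀ l ms u, Decidable (p.CertNonneg l ms u)
  | l, [], u => inferInstanceAs (Decidable (p.MoebiusNonneg l u))
  | l, m :: ms, u =>
    have := decidable p m ms u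
    inferInstanceAs (Decidable (p.MoebiusNonneg l m ∧ CertNonneg p m ms u))

@[simp] theorem eval_nil (x : ℝ) : eval [] x = 0 := rfl

@[simp] theorem eval_cons (a : ℤ) (p : CoeffList) (x : ℝ) :
    eval (a :: p) x = a + x * p.eval x := rfl

@[simp] theorem eval_add (p q : CoeffList) (x : ℝ) :
    (p.add q).eval x = p.eval x + q.eval x := by
  fun_induction add with
  | case1 | case2 => simp
  | case3 a p b q ih => simp only [eval_cons, ih]; push_cast; ring

@[simp] theorem eval_map_mul (a : ℤ) (p : CoeffList) (x : ℝ) :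
    eval (p.map (a * ·)) x = a * p.eval x := by
  induction p with
  | nil => simp
  | cons b p ih => simp only [List.map_cons, eval_cons, ih]; push_cast; ring

@[simp] theorem eval_mul (p q : CoeffList) (x : ℝ) :
    (p.mul q).eval x = p.eval x * q.eval x := by
  fun_induction mul with
  | case1 | case2 => simp
  | case3 q a p _ ih => simp only [eval_add, eval_map_mul, eval_cons, ih]; push_cast; ring

@[simp] theorem eval_pow (p : CoeffList) (n : ℕ) (x : ℝ) :
    (p.pow n).eval x = p.eval x ^ n := by
  induction n with
  | zero => simp [pow]
  | succ n ih => rw [pow, eval_mul, ih, pow_succ']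

theorem hasDerivAt_eval (p : CoeffList) (x : ℝ) :
    HasDerivAt p.eval (p.derivative.eval x) x := by
  induction p with
  | nil => exact hasDerivAt_const x 0
  | cons a p ih =>
    refine (((hasDerivAt_id x).mul ih).const_add (a : ℝ)).congr_deriv ?_
    simp [derivative]

theorem eval_moebius (a b c d : ℤ) (p : CoeffList) {y : ℝ} (h : (b + d * y : ℝ) ≠ 0) :
    (moebius a b c d p).1.eval y = (b + d * y) ^ p.length ∧
      (moebius a b c d p).2.eval y
        = (b + d * y) ^ p.length * p.eval ((a + c * y) / (b + d * y)) := by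
  induction p with
  | nil => simp [moebius]
  | cons k p ih =>
    simp only [moebius, eval_add, eval_map_mul, eval_mul, ih.1, ih.2, eval_cons, eval_nil,
      List.length_cons]
    refine ⟨by ring, ?_⟩
    set r := ((a + c * y) / (b + d * y) : ℝ) with hr
    rw [eq_div_iff h] at hr
    linear_combination -(b + d * y : ℝ) ^ p.length * eval p r * hr

theorem eval_nonneg {p : CoeffList} (hp : ∀ k ∈ p, 0 ≤ k) {x : ℝ} (hx : 0 ≤ x) :
    0 ≤ p.eval x := by
  induction p with
  | nil => simp
  | cons a p ih =>
    have ha : (0 : ℝ) ≤ a := by exact_mod_cast hp a List.mem_cons_self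
    have := ih fun k hk => hp k (List.mem_cons_of_mem a hk)
    rw [eval_cons]; positivity

theorem MoebiusNonneg.eval_nonneg {p : CoeffList} {l u : ℚ} (hp : p.MoebiusNonneg l u) {q : ℝ}
    (hl : l ≤ q) (hu : q < u) : 0 ≤ p.eval q := by
  set a : ℝ := (l.num : ℝ)
  set b : ℝ := (l.den : ℝ)
  set c : ℝ := (u.num : ℝ)
  set d : ℝ := (u.den : ℝ)
  have hb : 0 < b := by simp [b, l.den_pos]
  have hd : 0 < d := by simp [d, u.den_pos]
  have haq : a ≤ b * q := by
    rwa [Rat.cast_def, div_le_iff₀' hb] at hl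
  have hqc : d * q < c := by
    rwa [Rat.cast_def, lt_div_iff₀' hd] at hu
  have hdet : 0 < b * c - a * d := by
    nlinarith [mul_le_mul_of_nonneg_left haq hd.le, mul_lt_mul_of_pos_left hqc hb]
  have hcq : 0 < c - d * q := sub_pos.2 hqc
  set y : ℝ := (b * q - a) / (c - d * q)
  have hy : y * (c - d * q) = b * q - a := div_mul_cancel₀ _ hcq.ne'
  have hden : b + d * y = (b * c - a * d) / (c - d * q) := by
    rw [eq_div_iff hcq.ne']; linear_combination d * hy
  have hden_pos : 0 < b + d * y := hden ▸ div_pos hdet hcq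
  have hq : (a + c * y) / (b + d * y) = q := by
    rw [div_eq_iff hden_pos.ne']; linear_combination hy
  have key := CoeffList.eval_nonneg hp (x := y) (div_nonneg (sub_nonneg.2 haq) hcq.le)
  rw [(eval_moebius _ _ _ _ p (by push_cast; exact hden_pos.ne')).2] at key
  push_cast at key
  change 0 ≤ (b + d * y) ^ _ * p.eval ((a + c * y) / (b + d * y)) at key
  rw [hq] at key
  exact nonneg_of_mul_nonneg_right key (pow_pos hden_pos _)

theorem CertNonneg.eval_nonneg {p : CoeffList} {l u : ℚ} {ms : List ℚ} (hp : p.CertNonneg l ms u)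
    {q : ℝ} (hl : l ≤ q) (hu : q < u) : 0 ≤ p.eval q := by
  induction ms generalizing l with
  | nil => exact MoebiusNonneg.eval_nonneg hp hl hu
  | cons m ms ih =>
    rcases lt_or_ge q m with hm | hm
    · exact MoebiusNonneg.eval_nonneg hp.1 hl hm
    · exact ih hp.2 hm

end CoeffList

/-- The function `x ↦ (E(X²) + X O(X²)) / C(X²) ^ deg` with `X = tanh (x / (8√2))`, where `even` and
`odd` are the coefficients of `E` and `O`, and `C(X²) = ((1 + X)⁸ + (1 - X)⁸) / 2`. By the
multiplication formulas for `8 x / (8√2)`, such functions include the kink, its derivatives and the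
Virial weight, and inequalities between them become inequalities between integer polynomials. -/
structure KinkFunction where
  even : CoeffList
  odd : CoeffList
  deg : ℕ

namespace KinkFunction

/-- The common denominator `((1 + X)⁸ + (1 - X)⁸) / 2`, as a polynomial in `X²`. -/
def den : CoeffList := [1, 28, 70, 28, 1]

/-- `tanh (x / (8√2))` -/
def t : KinkFunction := ⟨[], [1], 0⟩

/-- `tanh (x / √2)` -/
def H : KinkFunction := ⟨[], [8, 56, 56, 8], 1⟩

/-- `sech (x / √2)` -/
def S : KinkFunction := ⟨[1, -4, 6, -4, 1], [], 1⟩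

/-- `sech (x / √2) * cosh (x / (8√2)) ^ 2` -/
def T : KinkFunction := ⟨[1, -3, 3, -1], [], 1⟩

instance : IntCast KinkFunction := ⟨fun n => ⟨[n], [], 0⟩⟩

instance (n : ℕ) : OfNat KinkFunction n := ⟨((n : ℤ) : KinkFunction)⟩

instance : Add KinkFunction where
  add p q :=
    { even := (p.even.mul (den.pow (q.deg - p.deg))).add (q.even.mul (den.pow (p.deg - q.deg)))
      odd := (p.odd.mul (den.pow (q.deg - p.deg))).add (q.odd.mul (den.pow (p.deg - q.deg)))
      deg := max p.deg q.deg }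

instance : Mul KinkFunction where
  mul p q :=
    { even := (p.even.mul q.even).add (.mul [0, 1] (p.odd.mul q.odd))
      odd := (p.even.mul q.odd).add (p.odd.mul q.even)
      deg := p.deg + q.deg }

instance : Neg KinkFunction := ⟨fun p => (-1 : ℤ) * p⟩

instance : Sub KinkFunction := ⟨fun p q => p + -q⟩

instance : Pow KinkFunction ℕ := ⟨fun p n => n.rec 1 fun _ r => p * r⟩

/-- The derivative with respect to `X = tanh (x / (8√2))`. -/
def derivative (p : KinkFunction) : KinkFunction where
  even := (den.mul (p.odd.add (.mul [0, 2] p.odd.derivative))).add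
    (.mul [0, -2 * p.deg] (den.derivative.mul p.odd))
  odd := (den.mul (.mul [2] p.even.derivative)).add
    (.mul [-2 * p.deg] (den.derivative.mul p.even))
  deg := p.deg + 1

/-- The derivative with respect to `x / (8√2)`, which keeps the coefficients integral. -/
def D (p : KinkFunction) : KinkFunction := (1 - t ^ 2) * p.derivative

/-- The rational function of `X = tanh (x / (8√2))` representing `p`. -/
noncomputable def frac (p : KinkFunction) (X : ℝ) : ℝ :=
  (p.even.eval (X ^ 2) + X * p.odd.eval (X ^ 2)) / den.eval (X ^ 2) ^ p.deg

/-- The function on the line represented by `p`. -/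
noncomputable def toFun (p : KinkFunction) (x : ℝ) : ℝ :=
  p.frac (Real.tanh (x / (8 * √2)))

noncomputable instance : CoeFun KinkFunction fun _ => ℝ → ℝ := ⟨toFun⟩

/-- A computable sufficient condition for `0 ≤ p x` whenever `0 ≤ x` and `t x ^ 2 ∈ [l, u)`. -/
def CertNonneg (p : KinkFunction) (l : ℚ) (ms : List ℚ) (u : ℚ) : Prop :=
  p.even.CertNonneg l ms u ∧ p.odd.CertNonneg l ms u

instance (p : KinkFunction) (l : ℚ) (ms : List ℚ) (u : ℚ) : Decidable (p.CertNonneg l ms u) :=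
  inferInstanceAs (Decidable (p.even.CertNonneg l ms u ∧ p.odd.CertNonneg l ms u))

section Algebra

variable (p q : KinkFunction) (X x : ℝ)

theorem add_even : (p + q).even = (p.even.mul (den.pow (q.deg - p.deg))).add
    (q.even.mul (den.pow (p.deg - q.deg))) := rfl

theorem add_odd : (p + q).odd = (p.odd.mul (den.pow (q.deg - p.deg))).add
    (q.odd.mul (den.pow (p.deg - q.deg))) := rfl

theorem add_deg : (p + q).deg = max p.deg q.deg := rfl

theorem mul_even : (p * q).even = (p.even.mul q.even).add (.mul [0, 1] (p.odd.mul q.odd)) := rfl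

theorem mul_odd : (p * q).odd = (p.even.mul q.odd).add (p.odd.mul q.even) := rfl

theorem mul_deg : (p * q).deg = p.deg + q.deg := rfl

theorem den_eval_pos : 0 < den.eval (X ^ 2) := by
  simp only [den, CoeffList.eval_cons, CoeffList.eval_nil]; push_cast; positivity

@[simp] theorem frac_add : (p + q).frac X = p.frac X + q.frac X := by
  have hd := (den_eval_pos X).ne'
  simp only [frac, add_even, add_odd, add_deg, CoeffList.eval_add, CoeffList.eval_mul,
    CoeffList.eval_pow]
  rw [div_add_div _ _ (pow_ne_zero _ hd) (pow_ne_zero _ hd), div_eq_div_iff (pow_ne_zero _ hd)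
    (mul_ne_zero (pow_ne_zero _ hd) (pow_ne_zero _ hd))]
  rcases le_total p.deg q.deg with h | h
  all_goals
    obtain ⟨n, hn⟩ := Nat.exists_eq_add_of_le h
    simp only [hn, max_eq_left, max_eq_right, Nat.le_add_right, Nat.add_sub_cancel_left,
      Nat.sub_eq_zero_of_le, pow_add, pow_zero]
    ring

@[simp] theorem frac_mul : (p * q).frac X = p.frac X * q.frac X := by
  simp only [frac, mul_even, mul_odd, mul_deg, CoeffList.eval_add, CoeffList.eval_mul, pow_add,
    div_mul_div_comm, CoeffList.eval_cons, CoeffList.eval_nil]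
  push_cast
  ring

@[simp] theorem frac_intCast (n : ℤ) : (n : KinkFunction).frac X = n := by
  change ((n + X ^ 2 * 0) + X * 0) / _ ^ 0 = (n : ℝ)
  simp

@[simp] theorem frac_ofNat (n : ℕ) [n.AtLeastTwo] :
    (ofNat(n) : KinkFunction).frac X = OfNat.ofNat n := frac_intCast X n

@[simp] theorem frac_one : (1 : KinkFunction).frac X = 1 :=
  (frac_intCast X 1).trans Int.cast_one

@[simp] theorem frac_neg : (-p).frac X = -p.frac X := by
  change ((-1 : ℤ) * p : KinkFunction).frac X = _
  simp

@[simp] theorem frac_sub : (p - q).frac X = p.frac X - q.frac X := by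
  change (p + -q).frac X = _
  simp [sub_eq_add_neg]

@[simp] theorem frac_pow (n : ℕ) : (p ^ n).frac X = p.frac X ^ n := by
  induction n with
  | zero => exact frac_one X
  | succ n ih => rw [pow_succ', ← ih]; exact frac_mul p (p ^ n) X

@[simp] theorem frac_t : t.frac X = X := by simp [frac, t]

theorem frac_D : p.D.frac X = (1 - X ^ 2) * p.derivative.frac X := by
  rw [D, frac_mul, frac_sub, frac_one, frac_pow, frac_t]

@[simp] theorem add_apply : (p + q : KinkFunction) x = p x + q x := frac_add ..

@[simp] theorem sub_apply : (p - q : KinkFunction) x = p x - q x := frac_sub ..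

@[simp] theorem mul_apply : (p * q : KinkFunction) x = p x * q x := frac_mul ..

@[simp] theorem neg_apply : (-p : KinkFunction) x = -p x := frac_neg ..

@[simp] theorem pow_apply (n : ℕ) : (p ^ n : KinkFunction) x = p x ^ n := frac_pow ..

@[simp] theorem intCast_apply (n : ℤ) : (n : KinkFunction) x = n := frac_intCast ..

@[simp] theorem ofNat_apply (n : ℕ) [n.AtLeastTwo] :
    (ofNat(n) : KinkFunction) x = OfNat.ofNat n := frac_ofNat ..

@[simp] theorem one_apply : (1 : KinkFunction) x = 1 := frac_one _

theorem t_apply : t x = Real.tanh (x / (8 * √2)) := frac_t _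

end Algebra

section Calculus

theorem hasDerivAt_frac (p : KinkFunction) (X : ℝ) :
    HasDerivAt p.frac (p.derivative.frac X) X := by
  have hcomp (c : CoeffList) :
      HasDerivAt (fun X => c.eval (X ^ 2)) (c.derivative.eval (X ^ 2) * (2 * X)) X := by
    simpa [Function.comp_def] using (c.hasDerivAt_eval (X ^ 2)).comp X (hasDerivAt_pow 2 X)
  have hd := (den_eval_pos X).ne'
  refine (((hcomp p.even).fun_add ((hasDerivAt_id X).fun_mul (hcomp p.odd))).fun_div
    ((hcomp den).fun_pow p.deg) (pow_ne_zero _ hd)).congr_deriv ?_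
  rcases p with ⟨e, o, _ | n⟩
  all_goals
    simp only [frac, derivative, CoeffList.eval_add, CoeffList.eval_mul, CoeffList.eval_cons,
      CoeffList.eval_nil, id, pow_succ, pow_zero, Nat.add_sub_cancel]
    push_cast
    field_simp
    ring

theorem one_sub_tanh_sq (y : ℝ) : 1 - Real.tanh y ^ 2 = 1 / Real.cosh y ^ 2 := by
  have := (Real.cosh_pos y).ne'
  rw [Real.tanh_eq_sinh_div_cosh, div_pow, Real.sinh_sq]
  field_simp
  ring

theorem hasDerivAt_tanh (y : ℝ) : HasDerivAt Real.tanh (1 - Real.tanh y ^ 2) y := by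
  have hc := (Real.cosh_pos y).ne'
  rw [funext Real.tanh_eq_sinh_div_cosh]
  refine ((Real.hasDerivAt_sinh y).div (Real.hasDerivAt_cosh y) hc).congr_deriv ?_
  field_simp

theorem tendsto_tanh_atTop : Tendsto Real.tanh atTop (𝓝 1) := by
  have hexp : Tendsto (fun y : ℝ => Real.exp (-2 * y)) atTop (𝓝 0) :=
    Real.tendsto_exp_atBot.comp (tendsto_id.const_mul_atTop_of_neg (by norm_num))
  have hlim := (hexp.const_sub 1).div (hexp.const_add 1) (by norm_num)
  rw [sub_zero, add_zero, div_one] at hlim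
  refine hlim.congr fun y => ?_
  have hy : Real.exp y * Real.exp (-2 * y) = Real.exp (-y) := by rw [← Real.exp_add]; ring_nf
  have := Real.exp_pos y
  rw [Pi.div_apply, Real.tanh_eq, ← hy, div_eq_div_iff (by positivity) (by positivity)]
  ring

theorem tanh_le_self {y : ℝ} (hy : 0 ≤ y) : Real.tanh y ≤ y := by
  have hd (x : ℝ) := (hasDerivAt_id x).fun_sub (hasDerivAt_tanh x)
  have hmono : Monotone fun x => id x - Real.tanh x := monotone_of_hasDerivAt_nonneg hd
    fun x => by simpa using sq_nonneg (Real.tanh x)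
  simpa using hmono hy

variable (p : KinkFunction) {x : ℝ}

protected theorem hasDerivAt (x : ℝ) : HasDerivAt p (p.D x / (8 * √2)) x := by
  refine ((hasDerivAt_frac p _).comp x ((hasDerivAt_tanh _).comp x
    ((hasDerivAt_id x).div_const (8 * √2)))).congr_deriv ?_
  rw [toFun, frac_D, Function.comp_apply, id]
  ring

protected theorem deriv : deriv p = fun x => p.D x / (8 * √2) :=
  funext fun x => (p.hasDerivAt x).deriv

protected theorem differentiable : Differentiable ℝ p :=
  fun x => (p.hasDerivAt x).differentiableAt

theorem differentiable_deriv : Differentiable ℝ (deriv p) := by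
  rw [p.deriv]; exact p.D.differentiable.div_const _

protected theorem continuous : Continuous p := p.differentiable.continuous

theorem exists_bound : ∃ C, ∀ x, |p x| ≤ C := by
  obtain ⟨C, hC⟩ := (isCompact_Icc (a := (-1 : ℝ)) (b := 1)).exists_bound_of_continuousOn
    (continuous_iff_continuousAt.2 fun X => (hasDerivAt_frac p X).continuousAt).continuousOn
  exact ⟨C, fun x => hC _ ⟨(Real.neg_one_lt_tanh _).le, (Real.tanh_lt_one _).le⟩⟩

theorem tendsto_atTop : Tendsto p atTop (𝓝 (p.frac 1)) :=
  (hasDerivAt_frac p 1).continuousAt.tendsto.comp <|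
    tendsto_tanh_atTop.comp (tendsto_id.atTop_div_const (by positivity))

theorem tendsto_D_atTop : Tendsto p.D atTop (𝓝 0) := by
  simpa [frac_D] using p.D.tendsto_atTop

variable {p}

theorem odd_of_even_eq_nil (hp : p.even = []) : Function.Odd p := fun x => by
  simp [toFun, frac, hp, neg_div, Real.tanh_neg]

theorem even_of_odd_eq_nil (hp : p.odd = []) : Function.Even p := fun x => by
  simp [toFun, frac, hp, neg_div, Real.tanh_neg]

theorem CertNonneg.nonneg {l u : ℚ} {ms : List ℚ} (hp : p.CertNonneg l ms u) (hx : 0 ≤ t x)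
    (hl : l ≤ t x ^ 2) (hu : t x ^ 2 < u) : 0 ≤ p x := by
  rw [t_apply] at hx hl hu
  exact div_nonneg (add_nonneg (hp.1.eval_nonneg hl hu) (mul_nonneg hx (hp.2.eval_nonneg hl hu)))
    (pow_nonneg (den_eval_pos _).le _)

end Calculus

section Generators

variable (X x : ℝ)

theorem frac_H :
    H.frac X = 8 * X * (1 + 7 * X ^ 2 + 7 * X ^ 4 + X ^ 6) / den.eval (X ^ 2) := by
  simp only [frac, H, CoeffList.eval_cons, CoeffList.eval_nil]
  push_cast
  ring

theorem frac_S : S.frac X = (1 - X ^ 2) ^ 4 / den.eval (X ^ 2) := by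
  simp only [frac, S, CoeffList.eval_cons, CoeffList.eval_nil]
  push_cast
  ring

theorem frac_T : T.frac X = (1 - X ^ 2) ^ 3 / den.eval (X ^ 2) := by
  simp only [frac, T, CoeffList.eval_cons, CoeffList.eval_nil]
  push_cast
  ring

theorem den_eval : den.eval (X ^ 2) = ((1 + X) ^ 8 + (1 - X) ^ 8) / 2 := by
  simp only [den, CoeffList.eval_cons, CoeffList.eval_nil]
  push_cast
  ring

@[simp] theorem frac_H_one : H.frac 1 = 1 := by
  rw [frac_H, den_eval]
  norm_num

@[simp] theorem frac_S_one : S.frac 1 = 0 := by simp [frac_S]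

theorem exp_eight_mul (y : ℝ) :
    Real.exp (8 * y) = Real.cosh y ^ 8 * (1 + Real.tanh y) ^ 8 := by
  have hc := (Real.cosh_pos y).ne'
  rw [← mul_pow, mul_add, mul_one, Real.tanh_eq_sinh_div_cosh, mul_div_cancel₀ _ hc,
    Real.cosh_add_sinh, ← Real.exp_nat_mul]
  norm_num

theorem cosh_eight_mul (y : ℝ) :
    Real.cosh (8 * y) = Real.cosh y ^ 8 * den.eval (Real.tanh y ^ 2) := by
  have h := exp_eight_mul (-y)
  rw [Real.cosh_neg, Real.tanh_neg, mul_neg] at h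
  rw [Real.cosh_eq, exp_eight_mul, h, den_eval]
  ring

theorem sinh_eight_mul (y : ℝ) :
    Real.sinh (8 * y) =
      Real.cosh y ^ 8 * (((1 + Real.tanh y) ^ 8 - (1 - Real.tanh y) ^ 8) / 2) := by
  have h := exp_eight_mul (-y)
  rw [Real.cosh_neg, Real.tanh_neg, mul_neg] at h
  rw [Real.sinh_eq, exp_eight_mul, h]
  ring

theorem eight_mul_div : 8 * (x / (8 * √2)) = x / √2 := by
  field_simp

theorem H_apply : H x = Real.tanh (x / √2) := by
  have hc := (Real.cosh_pos (x / (8 * √2))).ne'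
  rw [← eight_mul_div, Real.tanh_eq_sinh_div_cosh (8 * _), cosh_eight_mul, sinh_eight_mul,
    mul_div_mul_left _ _ (pow_ne_zero 8 hc), toFun, frac_H]
  ring

theorem S_apply : S x = sech (x / √2) := by
  rw [← eight_mul_div, sech, cosh_eight_mul, toFun, frac_S, one_sub_tanh_sq, one_div_pow]
  field_simp

theorem T_apply : T x = S x * Real.cosh (x / (8 * √2)) ^ 2 := by
  have hc := (Real.cosh_pos (x / (8 * √2))).ne'
  rw [toFun, toFun, frac_T, frac_S, one_sub_tanh_sq]
  field_simp

theorem H_sq : H x ^ 2 = 1 - S x ^ 2 := by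
  rw [H_apply, S_apply, sech, div_pow, one_pow, ← one_sub_tanh_sq]
  ring

theorem one_sub_H_sq : 1 - H x ^ 2 = S x ^ 2 := by rw [H_sq, sub_sub_cancel]

theorem hasDerivAt_H : HasDerivAt H (S x ^ 2 / √2) x := by
  rw [funext H_apply, ← one_sub_H_sq, H_apply]
  refine ((hasDerivAt_tanh _).comp x ((hasDerivAt_id x).div_const √2)).congr_deriv ?_
  rw [id, mul_one_div]

theorem hasDerivAt_S : HasDerivAt S (-(H x * S x) / √2) x := by
  simp only [funext S_apply, sech, H_apply, Real.tanh_eq_sinh_div_cosh]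
  have hc := (Real.cosh_pos (x / √2)).ne'
  refine ((hasDerivAt_const x (1 : ℝ)).div ((Real.hasDerivAt_cosh _).comp x
    ((hasDerivAt_id x).div_const √2)) hc).congr_deriv ?_
  rw [Function.comp_apply, id]
  field_simp
  ring

theorem hasDerivAt_t : HasDerivAt t ((1 - t x ^ 2) / (8 * √2)) x := by
  rw [funext t_apply]
  refine ((hasDerivAt_tanh _).comp x ((hasDerivAt_id x).div_const (8 * √2))).congr_deriv ?_
  rw [id, mul_one_div]

theorem tendsto_S_atTop : Tendsto S atTop (𝓝 0) := by simpa using S.tendsto_atTop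

theorem S_pos : 0 < S x := by
  rw [S_apply, sech]; exact one_div_pos.2 (Real.cosh_pos _)

theorem S_le_one : S x ≤ 1 := by nlinarith [S_pos x, H_sq x, sq_nonneg (H x)]

variable {x}

theorem t_nonneg (hx : 0 ≤ x) : 0 ≤ t x := by
  rw [t_apply, Real.tanh_eq_sinh_div_cosh]
  exact div_nonneg (Real.sinh_nonneg_iff.2 (by positivity)) (Real.cosh_pos _).le

theorem t_pos (hx : 0 < x) : 0 < t x := by
  rw [t_apply, Real.tanh_eq_sinh_div_cosh]
  exact div_pos (Real.sinh_pos_iff.2 (by positivity)) (Real.cosh_pos _)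

theorem t_sq_lt_one : t x ^ 2 < 1 := by
  rw [t_apply]; exact Real.tanh_sq_lt_one _

theorem t_strictMono : StrictMono t := strictMono_of_deriv_pos fun x =>
  (hasDerivAt_t x).deriv ▸ div_pos (sub_pos.2 t_sq_lt_one) (by positivity)

variable {p : KinkFunction}

theorem nonneg_of_certNonneg (ms : List ℚ) (hp : p.CertNonneg 0 ms 1) (hx : 0 ≤ x) : 0 ≤ p x :=
  hp.nonneg (t_nonneg hx) (by simpa using sq_nonneg (t x)) (by simpa using t_sq_lt_one)

end Generators

section Integration

theorem one_add_sq_half_le_cosh (y : ℝ) : 1 + y ^ 2 / 2 ≤ Real.cosh y := by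
  have h : (|y| / 2) ^ 2 ≤ Real.sinh (|y| / 2) ^ 2 := by
    gcongr; exact Real.self_le_sinh_iff.2 (by positivity)
  have hcosh : Real.cosh y = 1 + 2 * Real.sinh (|y| / 2) ^ 2 := by
    rw [← Real.cosh_abs, ← mul_div_cancel₀ |y| two_ne_zero, Real.cosh_two_mul, Real.cosh_sq,
      mul_div_cancel₀ |y| two_ne_zero]
    ring
  rw [div_pow, sq_abs] at h
  linarith

theorem integrable_S : Integrable S := by
  refine (integrable_inv_one_add_sq.const_mul 4).mono' S.continuous.aestronglyMeasurable
    (.of_forall fun x => ?_)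
  have h := one_add_sq_half_le_cosh (x / √2)
  rw [div_pow, Real.sq_sqrt zero_le_two] at h
  rw [Real.norm_of_nonneg (S_pos x).le, S_apply, sech, ← div_eq_mul_inv,
    div_le_div_iff₀ (Real.cosh_pos _) (by positivity)]
  linarith

variable {g : ℝ → ℝ}

theorem integrable_mul (p : KinkFunction) (hg : Integrable g) : Integrable fun x => p x * g x :=
  have ⟨_, hC⟩ := p.exists_bound
  hg.bdd_mul p.continuous.aestronglyMeasurable (.of_forall hC)

theorem integrable_mul_S (p : KinkFunction) : Integrable fun x => p x * S x :=
  p.integrable_mul integrable_S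

end Integration

end KinkFunction

section Comparison

/-- The two differential inequalities behind the Virial estimate at the point `x`: the trial
function `h` is a supersolution for the potential `V` up to the weight `Z`, and `f` controls the
error made by projecting along `h`. -/
structure IsComparisonAt (V Z h f : ℝ → ℝ) (x : ℝ) : Prop where
  trial_pos : 0 < h x
  pos : 0 < f x
  weight_nonneg : 0 ≤ Z x
  potential_le : V x * h x ≤ Z x - deriv (deriv h) x
  weight_le : Z x * f x ≤ deriv (deriv h) x * f x - h x * deriv (deriv f) x

/-- The density of the quadratic form `∫ w'² - V w²` with a Lagrange multiplier `2 v` for the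
constraint `∫ w Z = 0`. -/
noncomputable def virialDensity (V Z w : ℝ → ℝ) (v x : ℝ) : ℝ :=
  deriv w x ^ 2 - V x * w x ^ 2 + 2 * v * (w x * Z x)

/-- The primitive which is subtracted from `virialDensity` to complete the square
`((w - v h)' - (f' / f) (w - v h))²`. -/
noncomputable def boundaryTerm (h f w : ℝ → ℝ) (v x : ℝ) : ℝ :=
  deriv f x / f x * (w x - v * h x) ^ 2 + 2 * v * (w x - v * h x) * deriv h x
    + v ^ 2 * h x * deriv h x

variable {V Z h f f₁ f₂ w : ℝ → ℝ} {v a b c x : ℝ}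

theorem hasDerivAt_boundaryTerm (hh : DifferentiableAt ℝ h x) (hh' : DifferentiableAt ℝ (deriv h) x)
    (hf : DifferentiableAt ℝ f x) (hf' : DifferentiableAt ℝ (deriv f) x)
    (hw : DifferentiableAt ℝ w x) (hfx : f x ≠ 0) :
    HasDerivAt (boundaryTerm h f w v)
      (deriv w x ^ 2 - (deriv w x - v * deriv h x - deriv f x / f x * (w x - v * h x)) ^ 2
        + deriv (deriv f) x / f x * (w x - v * h x) ^ 2
        + 2 * v * (w x - v * h x) * deriv (deriv h) x + v ^ 2 * h x * deriv (deriv h) x) x := by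
  have hu := hw.hasDerivAt.fun_sub (hh.hasDerivAt.const_mul v)
  refine ((((hf'.hasDerivAt.fun_div hf.hasDerivAt hfx).fun_mul (hu.fun_pow 2)).fun_add
    ((hu.const_mul (2 * v)).fun_mul hh'.hasDerivAt)).fun_add
      ((hh.hasDerivAt.const_mul (v ^ 2)).fun_mul hh'.hasDerivAt)).congr_deriv ?_
  field_simp
  ring

theorem IsComparisonAt.deriv_boundaryTerm_le (hx : IsComparisonAt V Z h f x) :
    deriv w x ^ 2 - (deriv w x - v * deriv h x - deriv f x / f x * (w x - v * h x)) ^ 2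
        + deriv (deriv f) x / f x * (w x - v * h x) ^ 2
        + 2 * v * (w x - v * h x) * deriv (deriv h) x + v ^ 2 * h x * deriv (deriv h) x
      ≤ virialDensity V Z w v x := by
  obtain ⟨hh, hf, hZ, hV, hZf⟩ := hx
  have hV' : V x ≤ (Z x - deriv (deriv h) x) / h x := (le_div_iff₀ hh).2 hV
  have hf' : deriv (deriv f) x / f x ≤ (deriv (deriv h) x - Z x) / h x := by
    rw [div_le_div_iff₀ hf hh]; linarith
  set u := w x - v * h x with hu
  have hw : w x = u + v * h x := by rw [hu]; ring
  have hpot : V x * w x ^ 2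
      ≤ (Z x - deriv (deriv h) x) * (u ^ 2 / h x + 2 * u * v + v ^ 2 * h x) := by
    refine (mul_le_mul_of_nonneg_right hV' (sq_nonneg _)).trans_eq ?_
    rw [hw]; field_simp; ring
  have herr : deriv (deriv f) x / f x * u ^ 2 ≤ (deriv (deriv h) x - Z x) * (u ^ 2 / h x) :=
    (mul_le_mul_of_nonneg_right hf' (sq_nonneg _)).trans_eq (by ring)
  have hvZ : 0 ≤ v ^ 2 * h x * Z x := by positivity
  have hsq := sq_nonneg (deriv w x - v * deriv h x - deriv f x / f x * u)
  rw [virialDensity, hw] at *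
  nlinarith

theorem boundaryTerm_sub_le_integral (hab : a ≤ b) (hh : Differentiable ℝ h)
    (hh' : Differentiable ℝ (deriv h)) (hf : Differentiable ℝ f) (hf' : Differentiable ℝ (deriv f))
    (hw : Differentiable ℝ w) (hfab : ∀ x ∈ Icc a b, f x ≠ 0)
    (hcomp : ∀ x ∈ Ioo a b, IsComparisonAt V Z h f x)
    (hint : IntegrableOn (virialDensity V Z w v) (Icc a b)) :
    boundaryTerm h f w v b - boundaryTerm h f w v a ≤ ∫ x in a..b, virialDensity V Z w v x := by
  have hderiv (x) (hx : x ∈ Icc a b) :=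
    hasDerivAt_boundaryTerm (v := v) (hh x) (hh' x) (hf x) (hf' x) (hw x) (hfab x hx)
  exact intervalIntegral.sub_le_integral_of_hasDeriv_right_of_le hab
    (fun x hx => (hderiv x hx).continuousAt.continuousWithinAt)
    (fun x hx => (hderiv x (Ioo_subset_Icc_self hx)).hasDerivWithinAt) hint
    (fun x hx => (hcomp x hx).deriv_boundaryTerm_le)

/-- At `c` the boundary terms of the inner and outer comparisons agree, because `v = w c / h c`
makes `w - v h` vanish there. -/
theorem exists_integral_virialDensity_nonneg (hc : 0 < c) (hh : Differentiable ℝ h)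
    (hh' : Differentiable ℝ (deriv h)) (hf₁ : Differentiable ℝ f₁)
    (hf₁' : Differentiable ℝ (deriv f₁)) (hf₂ : Differentiable ℝ f₂)
    (hf₂' : Differentiable ℝ (deriv f₂)) (hw : Differentiable ℝ w) (h0 : h 0 = 0) (w0 : w 0 = 0)
    (hf₁0 : f₁ 0 ≠ 0) (hin : ∀ x ∈ Ioc 0 c, IsComparisonAt V Z h f₁ x)
    (hout : ∀ x ∈ Ici c, IsComparisonAt V Z h f₂ x)
    (hlim : ∀ v, Tendsto (boundaryTerm h f₂ w v) atTop (𝓝 0))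
    (hint : ∀ v, IntegrableOn (virialDensity V Z w v) (Ioi 0)) :
    ∃ v, 0 ≤ ∫ x in Ioi 0, virialDensity V Z w v x := by
  refine ⟨w c / h c, ?_⟩
  set v := w c / h c
  have hwc : w c - v * h c = 0 :=
    sub_eq_zero.2 (div_mul_cancel₀ _ (hin c ⟨hc, le_rfl⟩).trial_pos.ne').symm
  have hmatch : boundaryTerm h f₁ w v c = boundaryTerm h f₂ w v c := by
    simp only [boundaryTerm, hwc]; ring
  have hzero : boundaryTerm h f₁ w v 0 = 0 := by simp [boundaryTerm, h0, w0]
  have hintIcc {a b : ℝ} (ha : 0 ≤ a) : IntegrableOn (virialDensity V Z w v) (Icc a b) :=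
    ((integrableOn_Ici_iff_integrableOn_Ioi).2 (hint v)).mono_set fun x hx => ha.trans hx.1
  have hinner := boundaryTerm_sub_le_integral hc.le hh hh' hf₁ hf₁' hw
    (fun x hx => hx.1.eq_or_lt.elim (fun h => h ▸ hf₁0) fun h => (hin x ⟨h, hx.2⟩).pos.ne')
    (fun x hx => hin x (Ioo_subset_Ioc_self hx)) (hintIcc le_rfl)
  refine le_of_tendsto_of_tendsto (hlim v)
    (intervalIntegral_tendsto_integral_Ioi 0 (hint v) tendsto_id) ?_
  filter_upwards [eventually_ge_atTop c] with b hb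
  have houter := boundaryTerm_sub_le_integral hb hh hh' hf₂ hf₂' hw
    (fun x hx => (hout x hx.1).pos.ne') (fun x hx => hout x hx.1.le) (hintIcc hc.le)
  rw [id, ← intervalIntegral.integral_add_adjacent_intervals (b := c)]
  · linarith
  · exact (intervalIntegrable_iff_integrableOn_Icc_of_le hc.le).2 (hintIcc le_rfl)
  · exact (intervalIntegrable_iff_integrableOn_Icc_of_le hb).2 (hintIcc hc.le)

end Comparison

open KinkFunction

section Virial

/-- The potential `256 Vpot`. -/
def virialPotential : KinkFunction := 1 - t ^ 2 + 6144 * t * H * S * T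

/-- A trial function close to the extremal of the Virial quadratic form; its coefficients were found
numerically. -/
def trial : KinkFunction :=
  139 * t + 336 * H + 406 * H * S - 1959 * H * S ^ 2 + 2198 * H * S ^ 3 - 1215 * H * S ^ 4
    + 288 * H * S ^ 5

/-- The function compared with `trial` away from the origin; its coefficients were found
numerically. -/
def outerComparison : KinkFunction := 1000 * H + 632 * t - 3527 * H * S + 1196 * H * S ^ 2

theorem trial_cert : (trial - t).CertNonneg 0 [] 1 := by decide +kernel

theorem supersolution_cert :
    (H * S * (6400000 + 3200000 * t ^ 2 + 2400000 * t ^ 4) - 100 * trial.D.D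
      - (51 * virialPotential + 7680 * S) * trial).CertNonneg 0 [1 / 21] 1 := by
  decide +kernel

theorem innerComparison_cert :
    (9216 * trial + 49 * trial.D.D - 1568000 * H * T * (2 - t ^ 2)).CertNonneg 0 [] (1 / 20) := by
  decide +kernel

theorem outerComparison_pos_cert : (outerComparison - t).CertNonneg (9 / 196) [] 1 := by
  decide +kernel

theorem outerComparison_cert :
    (trial.D.D * outerComparison - trial * outerComparison.D.D
      - 32000 * H * T * (2 - t ^ 2) * outerComparison).CertNonneg (9 / 196) [1 / 2] 1 := by
  decide +kernel

theorem integrable_mul_of_integrable_sq {u v : ℝ → ℝ} (hu : AEStronglyMeasurable u)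
    (hv : AEStronglyMeasurable v) (hu2 : Integrable fun x => u x ^ 2)
    (hv2 : Integrable fun x => v x ^ 2) : Integrable fun x => u x * v x :=
  ((memLp_two_iff_integrable_sq hu).2 hu2).integrable_mul ((memLp_two_iff_integrable_sq hv).2 hv2)

theorem tendsto_zero_of_integrable_sq {w : ℝ → ℝ} (hw : Differentiable ℝ w)
    (hw2 : Integrable fun x => w x ^ 2) (hw'2 : Integrable fun x => deriv w x ^ 2) :
    Tendsto w atTop (𝓝 0) := by
  have hderiv (x : ℝ) : HasDerivAt (fun x => w x ^ 2) (2 * (w x * deriv w x)) x := by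
    simpa [mul_assoc] using (hw x).hasDerivAt.fun_pow 2
  have hint := (integrable_mul_of_integrable_sq hw.continuous.aestronglyMeasurable
    (stronglyMeasurable_deriv w).aestronglyMeasurable hw2 hw'2).const_mul 2
  have hsq := tendsto_zero_of_hasDerivAt_of_integrableOn_Ioi (a := 0) (fun x _ => hderiv x)
    hint.integrableOn hw2.integrableOn
  rw [tendsto_zero_iff_abs_tendsto_zero]
  simpa [Function.comp_def, Real.sqrt_sq_eq_abs] using hsq.sqrt

theorem integral_eq_two_mul_integral_Ioi {u : ℝ → ℝ} (hu : Function.Even u) :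
    ∫ x, u x = 2 * ∫ x in Ioi 0, u x := by
  rw [← integral_comp_abs]
  congr with x
  rcases abs_choice x with h | h <;> rw [h]
  exact (hu x).symm

theorem deriv_even_of_odd {w : ℝ → ℝ} (hw : Function.Odd w) : Function.Even (deriv w) := fun x => by
  have h := deriv_comp_neg w x
  rw [funext hw, deriv.fun_neg] at h
  linarith

theorem zetaV_pos (x : ℝ) : 0 < zetaV x := one_div_pos.2 (Real.cosh_pos _)

theorem zetaV_sq (x : ℝ) : zetaV x ^ 2 = 1 - t x ^ 2 := by
  rw [zetaV, sech, div_pow, one_pow, t_apply, one_sub_tanh_sq]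

theorem continuous_zetaV : Continuous zetaV := by
  unfold zetaV sech
  exact continuous_const.div (Real.continuous_cosh.comp (continuous_id.div_const _))
    fun x => (Real.cosh_pos _).ne'

theorem T_mul_zetaV_sq (x : ℝ) : T x * zetaV x ^ 2 = S x := by
  have := (Real.cosh_pos (x / (8 * √2))).ne'
  rw [T_apply, zetaV, sech]
  field_simp

theorem Vpot_eq (x : ℝ) : Vpot x = virialPotential x / 256 := by
  have hsech : sech (x / (8 * √2)) ^ 2 = 1 - t x ^ 2 := zetaV_sq x
  simp only [virialPotential, Vpot, hsech, T_apply, ← t_apply, ← H_apply, ← S_apply, add_apply,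
    sub_apply, mul_apply, pow_apply, ofNat_apply, one_apply]
  ring

theorem Y1_eq (x : ℝ) : Y1 x = 2 ^ (-(3 : ℝ) / 4) * √3 * (H x * S x) := by
  rw [Y1, ← H_apply, ← S_apply, mul_assoc _ (H x)]

theorem Z1_eq (x : ℝ) : Z1 x = 2 ^ (-(3 : ℝ) / 4) * √3 * (H x * T x * zetaV x) := by
  rw [Z1, Y1_eq, ← T_mul_zetaV_sq, zetaV, sech]
  field_simp

/-- The weight of the orthogonality condition, normalised to the size of `trial`. -/
noncomputable def virialWeight (x : ℝ) : ℝ := 500 * (H x * T x * zetaV x)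

/-- The potential left after sacrificing the coercive terms `∫ w'² / 50` and `3 / 5 ∫ S w²`. -/
noncomputable def reducedPotential (x : ℝ) : ℝ := 51 / 50 * Vpot x + 3 / 5 * S x

theorem zetaV_le (x : ℝ) : zetaV x ≤ 1 - t x ^ 2 / 2 :=
  abs_le_of_sq_le_sq' (by rw [zetaV_sq]; nlinarith [sq_nonneg (t x ^ 2)])
    (by linarith [t_sq_lt_one (x := x)]) |>.2

theorem le_zetaV (x : ℝ) : (1 - t x ^ 2) * (1 + t x ^ 2 / 2 + 3 * t x ^ 4 / 8) ≤ zetaV x := by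
  refine (abs_le_of_sq_le_sq' ?_ (zetaV_pos x).le).2
  have ht := t_sq_lt_one (x := x)
  have ht0 := sq_nonneg (t x)
  have h : (1 - t x ^ 2) * (1 + t x ^ 2 / 2 + 3 * t x ^ 4 / 8) ^ 2 ≤ 1 := by
    nlinarith [pow_nonneg ht0 3, pow_nonneg ht0 4, pow_nonneg ht0 5]
  rw [zetaV_sq]
  nlinarith

section Trial

variable {x : ℝ}

theorem t_le_trial (hx : 0 ≤ x) : t x ≤ trial x := by
  simpa using nonneg_of_certNonneg _ trial_cert hx

theorem H_nonneg (hx : 0 ≤ x) : 0 ≤ H x :=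
  nonneg_of_certNonneg [] (by decide +kernel) hx

theorem T_pos : 0 < T x := by
  rw [T_apply]; exact mul_pos (S_pos x) (pow_pos (Real.cosh_pos _) 2)

theorem deriv_deriv (p : KinkFunction) : deriv (deriv p) x = p.D.D x / 128 := by
  rw [p.deriv, deriv_div_const, p.D.deriv, div_div, mul_mul_mul_comm,
    Real.mul_self_sqrt zero_le_two]
  norm_num

theorem reducedPotential_mul_trial_le (hx : 0 ≤ x) :
    reducedPotential x * trial x ≤ virialWeight x - deriv (deriv trial) x := by
  have hcert := nonneg_of_certNonneg _ supersolution_cert hx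
  simp only [sub_apply, mul_apply, add_apply, ofNat_apply, pow_apply] at hcert
  have hT : S x * (1 + t x ^ 2 / 2 + 3 * t x ^ 4 / 8) ≤ T x * zetaV x := by
    rw [← T_mul_zetaV_sq, zetaV_sq, mul_assoc]
    exact mul_le_mul_of_nonneg_left (le_zetaV x) T_pos.le
  have := mul_le_mul_of_nonneg_left hT (H_nonneg hx)
  rw [deriv_deriv, reducedPotential, Vpot_eq, virialWeight]
  linarith

theorem virialWeight_nonneg (hx : 0 ≤ x) : 0 ≤ virialWeight x := by
  have := H_nonneg hx
  have := T_pos (x := x)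
  have := zetaV_pos x
  unfold virialWeight; positivity

theorem virialWeight_le (hx : 0 ≤ x) : virialWeight x ≤ 250 * (H x * T x * (2 - t x ^ 2)) := by
  have := mul_le_mul_of_nonneg_left (zetaV_le x) (mul_nonneg (H_nonneg hx) (T_pos (x := x)).le)
  rw [virialWeight]
  linarith

end Trial

/-- The point where the inner and outer comparison functions meet, chosen so that
`t matchingPoint = 3 / 14`. -/
noncomputable def matchingPoint : ℝ := 8 * √2 * Real.artanh (3 / 14)

/-- The function compared with `trial` between the origin and `matchingPoint`; its frequency was
found numerically. -/
noncomputable def innerComparison (x : ℝ) : ℝ := Real.cos (6 * √2 / 7 * (x - matchingPoint / 2))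

theorem t_matchingPoint : t matchingPoint = 3 / 14 := by
  rw [t_apply, matchingPoint, mul_div_cancel_left₀ _ (by positivity)]
  exact Real.tanh_artanh (by constructor <;> norm_num)

theorem matchingPoint_pos : 0 < matchingPoint :=
  mul_pos (by positivity) (Real.artanh_pos (by constructor <;> norm_num))

theorem inner_phase_lt : 6 * √2 / 7 * (matchingPoint / 2) < Real.pi / 2 := by
  have hexp : (17 / 11 : ℝ) ≤ Real.exp (9 / 20) :=
    le_trans (by norm_num) (Real.quadratic_le_exp_of_nonneg (by norm_num))
  have hlog : Real.log (17 / 11) ≤ 9 / 20 := (Real.log_le_iff_le_exp (by norm_num)).2 hexp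
  have hphase : 6 * √2 / 7 * (matchingPoint / 2) = 24 / 7 * Real.log (17 / 11) := by
    rw [matchingPoint, Real.artanh_eq_half_log (by constructor <;> norm_num)]
    norm_num
    linear_combination (12 / 7 * Real.log (17 / 11)) * Real.sq_sqrt zero_le_two
  linarith [Real.pi_gt_d2]

theorem hasDerivAt_innerComparison (x : ℝ) :
    HasDerivAt innerComparison
      (-(6 * √2 / 7) * Real.sin (6 * √2 / 7 * (x - matchingPoint / 2))) x := by
  refine (((hasDerivAt_id x).sub_const _).const_mul _).cos.congr_deriv ?_
  simp only [id]; ring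

theorem hasDerivAt_deriv_innerComparison (x : ℝ) :
    HasDerivAt (deriv innerComparison) (-(72 / 49) * innerComparison x) x := by
  rw [funext fun x => (hasDerivAt_innerComparison x).deriv, innerComparison]
  refine ((((hasDerivAt_id x).sub_const _).const_mul _).sin.const_mul _).congr_deriv ?_
  simp only [id]
  linear_combination (-(36 / 49) * Real.cos (6 * √2 / 7 * (x - matchingPoint / 2)))
    * Real.sq_sqrt zero_le_two

theorem innerComparison_pos {x : ℝ} (h0 : 0 ≤ x) (hx : x ≤ matchingPoint) :
    0 < innerComparison x := by
  have := mul_le_mul_of_nonneg_left hx (by positivity : 0 ≤ 6 * √2 / 7)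
  have : 0 ≤ 6 * √2 / 7 * x := by positivity
  apply Real.cos_pos_of_mem_Ioo
  constructor <;> linarith [inner_phase_lt]

theorem isComparisonAt_inner {x : ℝ} (h0 : 0 < x) (hx : x ≤ matchingPoint) :
    IsComparisonAt reducedPotential virialWeight trial innerComparison x where
  trial_pos := (t_pos h0).trans_le (t_le_trial h0.le)
  pos := innerComparison_pos h0.le hx
  weight_nonneg := virialWeight_nonneg h0.le
  potential_le := reducedPotential_mul_trial_le h0.le
  weight_le := by
    have ht : t x ^ 2 < (1 / 20 : ℚ) := by
      have := t_strictMono.monotone hx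
      rw [t_matchingPoint] at this
      push_cast
      nlinarith [t_nonneg h0.le]
    have hcert := innerComparison_cert.nonneg (t_nonneg h0.le) (by simpa using sq_nonneg (t x)) ht
    simp only [sub_apply, mul_apply, add_apply, ofNat_apply, pow_apply] at hcert
    have hZ : virialWeight x ≤ deriv (deriv trial) x + 72 / 49 * trial x := by
      rw [deriv_deriv]
      linarith [virialWeight_le h0.le]
    rw [(hasDerivAt_deriv_innerComparison x).deriv]
    linarith [mul_le_mul_of_nonneg_right hZ (innerComparison_pos h0.le hx).le]

theorem outerComparison_certs {x : ℝ} (hx : matchingPoint ≤ x) :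
    t x ≤ outerComparison x ∧
      32000 * H x * T x * (2 - t x ^ 2) * outerComparison x
        ≤ trial.D.D x * outerComparison x - trial x * outerComparison.D.D x := by
  have ht : 3 / 14 ≤ t x := t_matchingPoint ▸ t_strictMono.monotone hx
  have hl : ((9 / 196 : ℚ) : ℝ) ≤ t x ^ 2 := by push_cast; nlinarith
  have hu : t x ^ 2 < (1 : ℚ) := by simpa using t_sq_lt_one
  have hpos := outerComparison_pos_cert.nonneg (by linarith) hl hu
  have hcert := outerComparison_cert.nonneg (by linarith) hl hu
  simp only [sub_apply, mul_apply, ofNat_apply, pow_apply] at hpos hcert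
  exact ⟨sub_nonneg.1 hpos, sub_nonneg.1 hcert⟩

theorem isComparisonAt_outer {x : ℝ} (hx : matchingPoint ≤ x) :
    IsComparisonAt reducedPotential virialWeight trial outerComparison x := by
  have h0 : 0 < x := matchingPoint_pos.trans_le hx
  obtain ⟨hpos, hcert⟩ := outerComparison_certs hx
  have hf : 0 < outerComparison x := (t_pos h0).trans_le hpos
  refine ⟨(t_pos h0).trans_le (t_le_trial h0.le), hf, virialWeight_nonneg h0.le,
    reducedPotential_mul_trial_le h0.le, ?_⟩
  rw [deriv_deriv, deriv_deriv]
  nlinarith [mul_le_mul_of_nonneg_right (virialWeight_le h0.le) hf.le]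

section Coercivity

variable {w : ℝ → ℝ}

theorem tendsto_boundaryTerm (hw : Tendsto w atTop (𝓝 0)) (v : ℝ) :
    Tendsto (boundaryTerm trial outerComparison w v) atTop (𝓝 0) := by
  have hderiv (p : KinkFunction) : Tendsto (deriv p) atTop (𝓝 0) := by
    rw [p.deriv]
    simpa using p.tendsto_D_atTop.div_const (8 * √2)
  have hlim : outerComparison.frac 1 ≠ 0 := by
    norm_num [outerComparison]
  have hu := hw.sub (trial.tendsto_atTop.const_mul v)
  have := ((((hderiv outerComparison).div outerComparison.tendsto_atTop hlim).mul (hu.pow 2)).add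
    (((hu.const_mul (2 * v)).mul (hderiv trial)))).add
      ((trial.tendsto_atTop.const_mul (v ^ 2)).mul (hderiv trial))
  simp only [zero_div, zero_mul, mul_zero, add_zero] at this
  exact this

theorem integrable_mul_virialWeight (hw : Continuous w) (hw2 : Integrable fun x => w x ^ 2) :
    Integrable fun x => w x * virialWeight x := by
  have hZ : Continuous virialWeight :=
    ((H.continuous.mul T.continuous).mul continuous_zetaV).const_mul 500
  refine integrable_mul_of_integrable_sq hw.aestronglyMeasurable hZ.aestronglyMeasurable hw2
    (((H * H * T).integrable_mul_S.const_mul 250000).congr (.of_forall fun x => ?_))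
  simp only [virialWeight, ← T_mul_zetaV_sq, mul_apply]
  ring

theorem integrable_Vpot_mul_sq (hw2 : Integrable fun x => w x ^ 2) :
    Integrable fun x => Vpot x * w x ^ 2 := by
  simpa [Vpot_eq, div_mul_eq_mul_div] using (virialPotential.integrable_mul hw2).div_const 256

theorem Vpot_even : Function.Even Vpot := fun x => by
  rw [Vpot_eq, Vpot_eq, even_of_odd_eq_nil (by decide +kernel)]

theorem integral_mul_virialWeight (horth : ∫ x, w x * Z1 x = 0) :
    ∫ x, w x * virialWeight x = 0 := by
  have hZ (x : ℝ) :
      w x * virialWeight x = 500 / (2 ^ (-(3 : ℝ) / 4) * √3) * (w x * Z1 x) := by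
    rw [Z1_eq, virialWeight]; field_simp
  simp_rw [hZ]
  rw [integral_const_mul, horth, mul_zero]

theorem virialDensity_eq (v : ℝ) :
    virialDensity reducedPotential virialWeight w v = fun x =>
      51 / 50 * (deriv w x ^ 2 - Vpot x * w x ^ 2) - 1 / 50 * deriv w x ^ 2
        - 3 / 5 * (S x * w x ^ 2) + 2 * v * (w x * virialWeight x) := by
  funext x; rw [virialDensity, reducedPotential]; ring

theorem virialDensity_even (hodd : Function.Odd w) (v : ℝ) :
    Function.Even (virialDensity reducedPotential virialWeight w v) := fun x => by
  have hS : S (-x) = S x := even_of_odd_eq_nil (by decide +kernel) x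
  have hHT : (H * T) (-x) = -(H * T) x := odd_of_even_eq_nil (by decide +kernel) x
  have hζ : zetaV (-x) = zetaV x := by rw [zetaV, zetaV, sech, sech, neg_div, Real.cosh_neg]
  simp only [virialDensity, reducedPotential, virialWeight, deriv_even_of_odd hodd x, hodd x,
    Vpot_even x, hS, ← mul_apply, hHT, hζ]
  ring

theorem integrable_virialDensity (hw : Continuous w) (hw2 : Integrable fun x => w x ^ 2)
    (hw'2 : Integrable fun x => deriv w x ^ 2) (v : ℝ) :
    Integrable (virialDensity reducedPotential virialWeight w v) := by
  rw [virialDensity_eq]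
  exact ((((hw'2.sub (integrable_Vpot_mul_sq hw2)).const_mul _).sub (hw'2.const_mul _)).sub
    ((S.integrable_mul hw2).const_mul _)).add
      ((integrable_mul_virialWeight hw hw2).const_mul _)

theorem integral_virialDensity (hw : Continuous w) (hw2 : Integrable fun x => w x ^ 2)
    (hw'2 : Integrable fun x => deriv w x ^ 2) (horth : ∫ x, w x * Z1 x = 0) (v : ℝ) :
    ∫ x, virialDensity reducedPotential virialWeight w v x =
      51 / 50 * (∫ x, (deriv w x ^ 2 - Vpot x * w x ^ 2)) - 1 / 50 * (∫ x, deriv w x ^ 2)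
        - 3 / 5 * ∫ x, S x * w x ^ 2 := by
  have hV := (hw'2.sub (integrable_Vpot_mul_sq hw2)).const_mul (51 / 50)
  have hw' := hw'2.const_mul (1 / 50)
  have hS := (S.integrable_mul hw2).const_mul (3 / 5)
  have hZ := (integrable_mul_virialWeight hw hw2).const_mul (2 * v)
  rw [virialDensity_eq]
  refine (integral_add ((hV.sub hw').sub hS) hZ).trans ?_
  refine (congrArg₂ _ ((integral_sub (hV.sub hw') hS).trans
    (congrArg₂ _ (integral_sub hV hw') rfl)) rfl).trans ?_
  simp only [Pi.sub_apply, integral_const_mul, integral_mul_virialWeight horth, mul_zero, add_zero]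

theorem virial_coercivity (hodd : Function.Odd w) (hw : Differentiable ℝ w)
    (hw2 : Integrable fun x => w x ^ 2) (hw'2 : Integrable fun x => deriv w x ^ 2)
    (horth : ∫ x, w x * Z1 x = 0) :
    1 / 50 * (∫ x, deriv w x ^ 2) + 3 / 5 * ∫ x, S x * w x ^ 2
      ≤ 51 / 50 * ∫ x, (deriv w x ^ 2 - Vpot x * w x ^ 2) := by
  obtain ⟨v, hv⟩ := exists_integral_virialDensity_nonneg matchingPoint_pos trial.differentiable
    trial.differentiable_deriv (fun x => (hasDerivAt_innerComparison x).differentiableAt)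
    (fun x => (hasDerivAt_deriv_innerComparison x).differentiableAt)
    outerComparison.differentiable outerComparison.differentiable_deriv hw
    ((odd_of_even_eq_nil (by decide +kernel) : Function.Odd trial).map_zero) hodd.map_zero
    (innerComparison_pos le_rfl matchingPoint_pos.le).ne'
    (fun x hx => isComparisonAt_inner hx.1 hx.2) (fun x hx => isComparisonAt_outer hx)
    (tendsto_boundaryTerm (tendsto_zero_of_integrable_sq hw hw2 hw'2))
    (fun v => (integrable_virialDensity hw.continuous hw2 hw'2 v).integrableOn)
  have htotal := integral_eq_two_mul_integral_Ioi (virialDensity_even hodd v)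
  rw [integral_virialDensity hw.continuous hw2 hw'2 horth] at htotal
  linarith

end Coercivity

end Virial

section Source

/-- The constant factor between `fsrc` and `source`. -/
noncomputable def fsrcScale : ℝ := 9 * √2 / 8

theorem fsrcScale_pos : 0 < fsrcScale := by
  rw [fsrcScale]
  positivity

theorem fsrcScale_sq : fsrcScale ^ 2 = 81 / 32 := by
  rw [fsrcScale, div_pow, mul_pow, Real.sq_sqrt zero_le_two]
  norm_num

/-- The forcing profile `f` of the paper, normalized to have leading coefficient one. -/
noncomputable def source (x : ℝ) : ℝ := H x ^ 3 * S x ^ 2 - 3 * Real.pi / 32 * (H x * S x)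

/-- A primitive of `H ^ 4 * S ^ 3`. -/
noncomputable def primitiveHS (x : ℝ) : ℝ :=
  √2 * (Real.arctan (Real.sinh (x / √2)) / 16
    + (H x * S x / 16 - 7 / 24 * (H x * S x ^ 3) + H x * S x ^ 5 / 6))

theorem hasDerivAt_arctan_sinh (x : ℝ) :
    HasDerivAt (fun x => Real.arctan (Real.sinh (x / √2))) (S x / √2) x := by
  refine ((Real.hasDerivAt_sinh _).comp x ((hasDerivAt_id x).div_const √2)).arctan.congr_deriv ?_
  have hc := (Real.cosh_pos (x / √2)).ne'
  rw [S_apply, sech, Function.comp_apply, id, add_comm, ← Real.cosh_sq]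
  field_simp

theorem hasDerivAt_primitiveHS (x : ℝ) : HasDerivAt primitiveHS (H x ^ 4 * S x ^ 3) x := by
  have hH := hasDerivAt_H x
  have hS := hasDerivAt_S x
  have hpoly := (((hH.fun_mul hS).div_const 16).fun_sub
    ((hH.fun_mul (hS.fun_pow 3)).const_mul (7 / 24))).fun_add
      ((hH.fun_mul (hS.fun_pow 5)).div_const 6)
  refine (((hasDerivAt_arctan_sinh x).div_const 16).fun_add hpoly).const_mul √2 |>.congr_deriv ?_
  have h4 : H x ^ 4 = (1 - S x ^ 2) ^ 2 := by rw [← H_sq]; ring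
  push_cast
  field_simp
  rw [H_sq, h4]
  ring

theorem integral_H_pow_four_mul_S_pow_three :
    ∫ x, H x ^ 4 * S x ^ 3 = √2 * Real.pi / 16 := by
  have htop : Tendsto primitiveHS atTop (𝓝 (√2 * (Real.pi / 2 / 16))) := by
    have hgd : Tendsto (fun x => Real.arctan (Real.sinh (x / √2))) atTop (𝓝 (Real.pi / 2)) :=
      (Real.tendsto_arctan_atTop.mono_right nhdsWithin_le_nhds).comp
        (Real.sinhOrderIso.tendsto_atTop.comp (tendsto_id.atTop_div_const (by positivity)))
    have hH := H.tendsto_atTop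
    have hS := tendsto_S_atTop
    have := ((hgd.div_const 16).add ((((hH.mul hS).div_const 16).sub
      ((hH.mul (hS.pow 3)).const_mul (7 / 24))).add
        ((hH.mul (hS.pow 5)).div_const 6))).const_mul √2
    unfold primitiveHS
    simpa using this
  have heven : Function.Even fun x => H x ^ 4 * S x ^ 3 := fun x => by
    have := even_of_odd_eq_nil (p := H ^ 4 * S ^ 3) (by decide +kernel) x
    simpa using this
  have hzero : primitiveHS 0 = 0 := by
    simp [primitiveHS, (odd_of_even_eq_nil (p := H) rfl).map_zero]
  rw [integral_eq_two_mul_integral_Ioi heven, integral_Ioi_of_hasDerivAt_of_nonneg'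
    (fun x _ => hasDerivAt_primitiveHS x) (fun x _ => ?_) htop, hzero]
  · ring
  · have := S_pos x
    positivity

theorem fsrc_eq (x : ℝ) : fsrc x = fsrcScale * source x := by
  set C : ℝ := 2 ^ (-(3 : ℝ) / 4) * √3 with hC
  have hC2 : C ^ 2 = 3 * √2 / 4 := by
    rw [hC, mul_pow, Real.sq_sqrt zero_le_three, ← Real.rpow_natCast, ← Real.rpow_mul zero_le_two,
      Real.sqrt_eq_rpow, show (-(3 : ℝ) / 4) * (2 : ℕ) = 1 / 2 - 2 by norm_num,
      Real.rpow_sub zero_lt_two]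
    norm_num
    ring
  have hint : ∫ y, Hkink y * Y1 y ^ 3 = C ^ 3 * (√2 * Real.pi / 16) := by
    rw [← integral_H_pow_four_mul_S_pow_three, ← integral_const_mul]
    congr with y
    rw [Y1_eq, Hkink, ← H_apply]
    ring
  have hC4 : C ^ 4 = 9 / 8 := by
    rw [pow_mul C 2 2, hC2, div_pow, mul_pow, Real.sq_sqrt zero_le_two]
    norm_num
  rw [fsrc, hint, Y1_eq, ← hC, Hkink, ← H_apply, source, fsrcScale]
  linear_combination (3 / 2 * H x ^ 3 * S x ^ 2) * hC2
    - (3 / 2 * (√2 * Real.pi / 16) * H x * S x) * hC4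

/-- `10 ^ 7` times `source`, with `10 ^ 7 * (3 * π / 32)` replaced by the integer `P`. -/
def scaledSource (P : ℤ) : KinkFunction := 10000000 * H ^ 3 * S ^ 2 - P * (H * S)

/-- An inequality which is affine in `3 * π / 32` need only be checked at two decimal approximations
of it. -/
theorem nonneg_of_pi_approx {A B : ℝ}
    (h : ∀ P ∈ [2945243, 2945244], 0 ≤ 10000000 * A - (P : ℤ) * B) :
    0 ≤ A - 3 * Real.pi / 32 * B := by
  have hlo := h 2945243 (by simp)
  have hhi := h 2945244 (by simp)
  have := Real.pi_gt_d20
  have := Real.pi_lt_d20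
  push_cast at *
  rcases le_total 0 B with hB | hB <;> nlinarith [hB]

end Source

section Jost

open ComplexConjugate

/-- The derivative of the Jost function `kJost`. -/
noncomputable def kJostDeriv (x : ℝ) : ℂ :=
  Complex.exp (2 * Complex.I * x) *
    ((-(√2 / 2 * H x * S x ^ 2) - 2 * √2 * H x : ℝ) + (2 + 2 * S x ^ 2 : ℝ) * Complex.I)

theorem kJost_eq (x : ℝ) : kJost x = Complex.exp (2 * Complex.I * x) *
    ((1 + S x ^ 2 / 2 : ℝ) + (√2 * H x : ℝ) * Complex.I) := by
  rw [kJost, ← S_apply, ← H_apply]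
  push_cast
  ring

theorem hasDerivAt_exp_two_mul_I (x : ℝ) :
    HasDerivAt (fun x : ℝ => Complex.exp (2 * Complex.I * x))
      (Complex.exp (2 * Complex.I * x) * (2 * Complex.I)) x := by
  simpa using ((Complex.ofRealCLM.hasDerivAt (x := x)).const_mul (2 * Complex.I)).cexp

theorem norm_exp_two_mul_I (x : ℝ) : ‖Complex.exp (2 * Complex.I * x)‖ = 1 := by
  simpa [mul_right_comm] using Complex.norm_exp_ofReal_mul_I (2 * x)

theorem hasDerivAt_exp_mul {a b : ℝ → ℝ} {a' b' x : ℝ} (ha : HasDerivAt a a' x)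
    (hb : HasDerivAt b b' x) :
    HasDerivAt (fun x : ℝ => Complex.exp (2 * Complex.I * x) * (a x + b x * Complex.I))
      (Complex.exp (2 * Complex.I * x) *
        ((a' - 2 * b x : ℝ) + (b' + 2 * a x : ℝ) * Complex.I)) x := by
  refine ((hasDerivAt_exp_two_mul_I x).fun_mul
    (ha.ofReal_comp.fun_add (hb.ofReal_comp.mul_const Complex.I))).congr_deriv ?_
  push_cast
  linear_combination (Complex.exp (2 * Complex.I * x) * 2 * b x) * Complex.I_sq

theorem hasDerivAt_kJost (x : ℝ) : HasDerivAt kJost (kJostDeriv x) x := by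
  rw [funext kJost_eq]
  refine (hasDerivAt_exp_mul (a' := -(√2 / 2 * H x * S x ^ 2)) (b' := S x ^ 2)
    (((((hasDerivAt_S x).fun_pow 2).div_const 2).const_add 1).congr_deriv ?_)
    (((hasDerivAt_H x).const_mul √2).congr_deriv ?_)).congr_deriv ?_
  · push_cast
    field_simp
    rw [Real.sq_sqrt zero_le_two]
    ring
  · field_simp
  · rw [kJostDeriv]
    push_cast
    ring

theorem hasDerivAt_kJostDeriv (x : ℝ) :
    HasDerivAt kJostDeriv (-((4 + 3 * S x ^ 2 : ℝ) * kJost x)) x := by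
  have hH := hasDerivAt_H x
  have hS := (hasDerivAt_S x).fun_pow 2
  refine (hasDerivAt_exp_mul (a' := -S x ^ 2 - 3 * S x ^ 4 / 2)
    (b' := -(2 * √2 * H x * S x ^ 2))
    ((((hH.const_mul (√2 / 2)).fun_mul hS).fun_neg.fun_sub
      (hH.const_mul (2 * √2))).congr_deriv ?_)
    (((hS.const_mul 2).const_add 2).congr_deriv ?_)).congr_deriv ?_
  · push_cast
    field_simp
    rw [H_sq]
    ring
  · push_cast
    field_simp
    rw [Real.sq_sqrt zero_le_two]
    ring
  · rw [kJost_eq]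
    push_cast
    ring

theorem norm_exp_mul_sq (x a b : ℝ) :
    ‖Complex.exp (2 * Complex.I * x) * (a + b * Complex.I)‖ ^ 2 = a ^ 2 + b ^ 2 := by
  rw [norm_mul, norm_exp_two_mul_I, one_mul, Complex.sq_norm, Complex.normSq_add_mul_I]

theorem norm_kJost_le (x : ℝ) : ‖kJost x‖ ≤ √3 := by
  refine Real.le_sqrt_of_sq_le ?_
  rw [kJost_eq, norm_exp_mul_sq, mul_pow, Real.sq_sqrt zero_le_two, H_sq]
  nlinarith [sq_nonneg (S x), pow_le_one₀ (n := 2) (S_pos x).le (S_le_one x)]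

theorem norm_kJostDeriv_le (x : ℝ) : ‖kJostDeriv x‖ ≤ 6 := by
  refine abs_le_of_sq_le_sq' ?_ (by norm_num) |>.2
  have h1 := pow_le_one₀ (n := 2) (S_pos x).le (S_le_one x)
  have h : ‖kJostDeriv x‖ ^ 2 = (1 - S x ^ 2) * (S x ^ 2 + 4) ^ 2 / 2 + (2 + 2 * S x ^ 2) ^ 2 := by
    rw [kJostDeriv, norm_exp_mul_sq, ← H_sq]
    linear_combination (H x ^ 2 * (S x ^ 2 + 4) ^ 2 / 4) * Real.sq_sqrt zero_le_two
  rw [h]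
  nlinarith [sq_nonneg (S x), mul_nonneg (sq_nonneg (S x)) (sub_nonneg.2 h1)]

theorem im_conj_kJost_mul_kJostDeriv (x : ℝ) : (conj (kJost x) * kJostDeriv x).im = 6 := by
  have hexp : conj (Complex.exp (2 * Complex.I * x)) * Complex.exp (2 * Complex.I * x) = 1 := by
    rw [← Complex.normSq_eq_conj_mul_self, ← Complex.sq_norm, norm_exp_two_mul_I]
    norm_num
  rw [kJost_eq, kJostDeriv, map_mul, mul_mul_mul_comm, hexp, one_mul]
  simp only [map_add, map_mul, Complex.conj_ofReal, Complex.conj_I, Complex.mul_im, Complex.add_re,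
    Complex.add_im, Complex.ofReal_re, Complex.ofReal_im, Complex.mul_re, Complex.neg_re,
    Complex.neg_im, Complex.I_re, Complex.I_im]
  linear_combination
    (H x ^ 2 * (S x ^ 2 / 2 + 2)) * Real.sq_sqrt zero_le_two + (S x ^ 2 + 4) * H_sq x

theorem kJost_zero_im : (kJost 0).im = 0 := by
  simp [kJost_eq, (odd_of_even_eq_nil (p := H) rfl).map_zero, -Complex.ofReal_pow]

/-- A solution of `-u'' - 4 u - 3 sech² (x / √2) u = ρ`, that is of `(L - 6) u = ρ`, which decays at
`+∞` together with its derivative. -/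
structure IsDecayingSolution (ρ u : ℝ → ℝ) : Prop where
  differentiable : Differentiable ℝ u
  differentiable_deriv : Differentiable ℝ (deriv u)
  deriv_deriv : ∀ x, deriv (deriv u) x = -((4 + 3 * S x ^ 2) * u x) - ρ x
  tendsto : Tendsto u atTop (𝓝 0)
  tendsto_deriv : Tendsto (deriv u) atTop (𝓝 0)

theorem le_of_tendsto_of_deriv_nonpos {f f' : ℝ → ℝ} {x l : ℝ}
    (hf : ∀ y, HasDerivAt f (f' y) y) (hf' : ∀ y > x, f' y ≤ 0) (hl : Tendsto f atTop (𝓝 l)) :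
    l ≤ f x := by
  have hanti : AntitoneOn f (Ici x) := antitoneOn_of_deriv_nonpos (convex_Ici x)
    (fun y _ => (hf y).continuousAt.continuousWithinAt)
    (fun y _ => (hf y).differentiableAt.differentiableWithinAt)
    fun y hy => (hf y).deriv.trans_le (hf' y (by rwa [interior_Ici] at hy))
  exact le_of_tendsto hl ((eventually_ge_atTop x).mono fun y hy => hanti self_mem_Ici hy hy)

theorem hasDerivAt_neg_mul_S (c x : ℝ) :
    HasDerivAt (fun x => -(c * √2 * S x)) (c * (H x * S x)) x := by
  refine ((hasDerivAt_S x).const_mul (c * √2)).fun_neg.congr_deriv ?_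
  field_simp

namespace IsDecayingSolution

variable {ρ σ u v : ℝ → ℝ}

theorem const_mul (h : IsDecayingSolution ρ u) (c : ℝ) :
    IsDecayingSolution (fun x => c * ρ x) (fun x => c * u x) := by
  have hd : deriv (fun x => c * u x) = fun x => c * deriv u x :=
    funext fun x => deriv_const_mul c (h.differentiable x)
  refine ⟨h.differentiable.const_mul c, hd ▸ h.differentiable_deriv.const_mul c, fun x => ?_,
    by simpa using h.tendsto.const_mul c, by simpa [hd] using h.tendsto_deriv.const_mul c⟩
  rw [hd, deriv_const_mul c (h.differentiable_deriv x), h.deriv_deriv]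
  ring

theorem sub (h : IsDecayingSolution ρ u) (k : IsDecayingSolution σ v) :
    IsDecayingSolution (fun x => ρ x - σ x) (fun x => u x - v x) := by
  have hd : deriv (fun x => u x - v x) = fun x => deriv u x - deriv v x :=
    funext fun x => deriv_fun_sub (h.differentiable x) (k.differentiable x)
  refine ⟨h.differentiable.sub k.differentiable,
    hd ▸ h.differentiable_deriv.sub k.differentiable_deriv, fun x => ?_,
    by simpa using h.tendsto.sub k.tendsto, by simpa [hd] using h.tendsto_deriv.sub k.tendsto_deriv⟩
  rw [hd, deriv_fun_sub (h.differentiable_deriv x) (k.differentiable_deriv x), h.deriv_deriv,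
    k.deriv_deriv]
  ring

/-- The Wronskian `u Im(c k') - u' Im(c k)` has derivative `ρ Im(c k)` and tends to `0`. -/
theorem wronskian_le (h : IsDecayingSolution ρ u) (c : ℂ) {G G' : ℝ → ℝ} {l x : ℝ}
    (hG : ∀ y, HasDerivAt G (G' y) y) (hl : Tendsto G atTop (𝓝 l))
    (hle : ∀ y > x, ρ y * (c * kJost y).im ≤ G' y) :
    G x - l ≤ u x * (c * kJostDeriv x).im - deriv u x * (c * kJost x).im := by
  have him {z : ℝ → ℂ} {z' : ℂ} {y : ℝ} (hz : HasDerivAt z z' y) :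
      HasDerivAt (fun y => (c * z y).im) (c * z').im y :=
    Complex.imCLM.hasFDerivAt.comp_hasDerivAt y (hz.const_mul c)
  have hW (y : ℝ) :=
    (((h.differentiable y).hasDerivAt.fun_mul (him (hasDerivAt_kJostDeriv y))).fun_sub
      ((h.differentiable_deriv y).hasDerivAt.fun_mul (him (hasDerivAt_kJost y)))).fun_sub (hG y)
  have hbound {z : ℝ → ℂ} {C : ℝ} (hz : ∀ y, ‖z y‖ ≤ C) :
      IsBoundedUnder (· ≤ ·) atTop (norm ∘ fun y => (c * z y).im) :=
    isBoundedUnder_of ⟨‖c‖ * C, fun y => (Complex.abs_im_le_norm _).trans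
      (norm_mul c _ ▸ mul_le_mul_of_nonneg_left (hz y) (norm_nonneg c))⟩
  have hlim := ((h.tendsto.zero_mul_isBoundedUnder_le (hbound norm_kJostDeriv_le)).sub
    (h.tendsto_deriv.zero_mul_isBoundedUnder_le (hbound norm_kJost_le))).sub hl
  have := le_of_tendsto_of_deriv_nonpos (x := x) hW (fun y hy => ?_) hlim
  · linarith
  · have := hle y hy
    rw [h.deriv_deriv, ← neg_mul, mul_left_comm, ← Complex.ofReal_neg, Complex.im_ofReal_mul]
    linarith

theorem abs_le (h : IsDecayingSolution ρ u) {ε x : ℝ}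
    (hρ : ∀ y > x, |ρ y| ≤ ε * (H y * S y)) : |u x| ≤ ε / 2 * √2 * S x := by
  have key (s : ℝ) (hs : |s| = 1) : -(ε / 2 * √2 * S x) ≤ s * u x := by
    have hker (y : ℝ) : |((s / 6 : ℝ) * conj (kJost x) * kJost y).im| ≤ 1 / 2 := by
      refine (Complex.abs_im_le_norm _).trans ?_
      rw [norm_mul, norm_mul, Complex.norm_real, Complex.norm_conj, Real.norm_eq_abs, abs_div, hs]
      have := mul_le_mul (norm_kJost_le x) (norm_kJost_le y) (norm_nonneg _) (Real.sqrt_nonneg 3)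
      rw [Real.mul_self_sqrt zero_le_three] at this
      norm_num
      linarith
    have hW := h.wronskian_le ((s / 6 : ℝ) * conj (kJost x)) (hasDerivAt_neg_mul_S (ε / 2))
      (by simpa using (tendsto_S_atTop.const_mul (ε / 2 * √2)).neg) fun y hy => by
        have := mul_le_mul (hρ y hy) (hker y) (abs_nonneg _) ((abs_nonneg _).trans (hρ y hy))
        rw [← abs_mul] at this
        linarith [le_abs_self (ρ y * ((s / 6 : ℝ) * conj (kJost x) * kJost y).im)]
    simp only [mul_assoc ((s / 6 : ℝ) : ℂ), Complex.im_ofReal_mul] at hW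
    rw [im_conj_kJost_mul_kJostDeriv, ← Complex.normSq_eq_conj_mul_self, Complex.ofReal_im] at hW
    linarith
  have hpos := key 1 (by simp)
  have hneg := key (-1) (by simp)
  exact _root_.abs_le.2 ⟨by linarith, by linarith⟩

end IsDecayingSolution

end Jost

section Forcing

/-- The right-hand side of the equation for `g`, divided by `fsrcScale`. -/
noncomputable def forcing (a x : ℝ) : ℝ :=
  t x * (8 * √2 * deriv source x) + (a + 1 / 2) * ((1 - t x ^ 2) * source x)

/-- `128` times `-u'' - 4 u - 3 sech² (x / √2) u`. -/
def KinkFunction.jostOperator (p : KinkFunction) : KinkFunction :=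
  -p.D.D - 512 * p - 384 * S ^ 2 * p

/-- `10 ^ 5` times a numerical solution for the forcing with `a = 0.68725`. -/
def approxSolution : KinkFunction :=
  6777 * H * S - 6717 * H * S ^ 2 + 32558 * H * S ^ 3 - 3860 * H * S ^ 4 + 556 * H * S ^ 5
    - 54362 * t * S + 265369 * t * S ^ 2 - 24283 * t * S ^ 3 - 658793 * t * S ^ 4
    - 4775 * t ^ 2 * H * S

/-- `10 ^ 4` times a numerical solution for `(1 - t ^ 2) * source`, the derivative of the forcing
in `a`. No decaying solution exists, since this is not orthogonal to `Im kJost`; a multiple of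
`H * S ^ 12` is left over. -/
def approxSensitivity : KinkFunction :=
  778 * H * S - 60 * H * S ^ 2 - 4497 * H * S ^ 3 + 9161 * H * S ^ 4 - 9305 * H * S ^ 5
    + 4338 * H * S ^ 6 - 343 * t * S - 3771 * t * S ^ 2 - 434 * t ^ 2 * H * S

/-- A primitive minorant of `H * S ^ 12 * Im kJost`, up to a constant factor. -/
def jostMinorant : KinkFunction :=
  3554 * H + 1801 * H * S ^ 2 + 460 * H * S ^ 3 - 12007 * H * S ^ 4 + 139958 * H * S ^ 5
    - 715212 * H * S ^ 6 + 2015101 * H * S ^ 7 - 3222473 * H * S ^ 8 + 2843908 * H * S ^ 9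
    - 1055111 * H * S ^ 10

theorem KinkFunction.D_apply (p : KinkFunction) (x : ℝ) : p.D x = 8 * √2 * deriv p x := by
  rw [p.deriv]
  field_simp

theorem KinkFunction.isDecayingSolution {p : KinkFunction} (hp : p.frac 1 = 0) :
    IsDecayingSolution (fun x => p.jostOperator x / 128) p := by
  refine ⟨p.differentiable, p.differentiable_deriv, fun x => ?_, hp ▸ p.tendsto_atTop, ?_⟩
  · simp only [jostOperator, sub_apply, neg_apply, mul_apply, pow_apply, ofNat_apply]
    rw [deriv_deriv]
    ring
  · simpa [p.deriv] using p.tendsto_D_atTop.div_const (8 * √2)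

theorem differentiable_source : Differentiable ℝ source := fun x =>
  (((H.differentiable x).fun_pow 3).fun_mul ((S.differentiable x).fun_pow 2)).fun_sub
    (((H.differentiable x).fun_mul (S.differentiable x)).const_mul _)

theorem deriv_source (x : ℝ) : 8 * √2 * deriv source x
    = (H ^ 3 * S ^ 2 : KinkFunction).D x - 3 * Real.pi / 32 * (H * S : KinkFunction).D x := by
  have hsource : source = fun x =>
      (H ^ 3 * S ^ 2 : KinkFunction) x - 3 * Real.pi / 32 * (H * S : KinkFunction) x := by
    funext x
    simp only [source, mul_apply, pow_apply]
  have hd := ((H ^ 3 * S ^ 2 : KinkFunction).hasDerivAt x).fun_sub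
    (((H * S : KinkFunction).hasDerivAt x).const_mul (3 * Real.pi / 32))
  rw [hsource, hd.deriv]
  field_simp

theorem forcing_residual_nonneg : ∀ e ∈ [1, -1], ∀ P ∈ [2945243, 2945244],
    ((e : ℤ) * (12800000 * t * (10000000 * (H ^ 3 * S ^ 2).D - (P : ℤ) * (H * S).D)
      + 15196800 * (1 - t ^ 2) * scaledSource P - 10000000 * approxSolution.jostOperator)
      + 6400000000 * H * S).CertNonneg 0 [1 / 40] 1 := by decide +kernel

theorem abs_forcing_sub_le {x : ℝ} (hx : 0 ≤ x) :
    |forcing 0.68725 x - 0.00001 * (approxSolution.jostOperator x / 128)|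
      ≤ 0.00005 * (H x * S x) := by
  have key (e : ℤ) (he : e ∈ [1, -1]) :
      0 ≤ e * (forcing 0.68725 x - 0.00001 * (approxSolution.jostOperator x / 128))
        + 0.00005 * (H x * S x) := by
    have := nonneg_of_pi_approx
      (A := e * (12800000 * t x * (H ^ 3 * S ^ 2 : KinkFunction).D x
        + 15196800 * (1 - t x ^ 2) * (H x ^ 3 * S x ^ 2) - approxSolution.jostOperator x)
        + 640 * (H x * S x))
      (B := e * (12800000 * t x * (H * S : KinkFunction).D x
        + 15196800 * (1 - t x ^ 2) * (H x * S x))) fun P hP => by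
          have := nonneg_of_certNonneg _ (forcing_residual_nonneg e he P hP) hx
          simp only [scaledSource, add_apply, sub_apply, mul_apply, pow_apply, ofNat_apply,
            one_apply, intCast_apply] at this
          linarith
    rw [forcing, deriv_source, source]
    linarith
  have hpos := key 1 (by simp)
  have hneg := key (-1) (by simp)
  push_cast at hpos hneg
  exact abs_le.2 ⟨by linarith, by linarith⟩

theorem sensitivity_residual_nonneg : ∀ e ∈ [1, -1], ∀ P ∈ [2945243, 2945244],
    ((e : ℤ) * (1280000 * (1 - t ^ 2) * scaledSource P - 10000000 * approxSensitivity.jostOperator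
      + 9701120000000 * H * S ^ 12) + 25600000000 * H * S).CertNonneg 0 [1 / 54, 1 / 9] 1 := by
  decide +kernel

theorem abs_sensitivity_sub_le {x : ℝ} (hx : 0 ≤ x) :
    |(1 - t x ^ 2) * source x - 0.0001 * (approxSensitivity.jostOperator x / 128)
      + 0.7579 * (H x * S x ^ 12)| ≤ 0.002 * (H x * S x) := by
  have key (e : ℤ) (he : e ∈ [1, -1]) :
      0 ≤ e * ((1 - t x ^ 2) * source x - 0.0001 * (approxSensitivity.jostOperator x / 128)
        + 0.7579 * (H x * S x ^ 12)) + 0.002 * (H x * S x) := by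
    have := nonneg_of_pi_approx
      (A := e * (1280000 * (1 - t x ^ 2) * (H x ^ 3 * S x ^ 2) - approxSensitivity.jostOperator x
        + 970112 * (H x * S x ^ 12)) + 2560 * (H x * S x))
      (B := e * (1280000 * (1 - t x ^ 2) * (H x * S x))) fun P hP => by
          have := nonneg_of_certNonneg _ (sensitivity_residual_nonneg e he P hP) hx
          simp only [scaledSource, add_apply, sub_apply, mul_apply, pow_apply, ofNat_apply,
            one_apply, intCast_apply] at this
          linarith
    rw [source]
    linarith
  have hpos := key 1 (by simp)
  have hneg := key (-1) (by simp)
  push_cast at hpos hneg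
  exact abs_le.2 ⟨by linarith, by linarith⟩

theorem kJost_im (x : ℝ) :
    (kJost x).im = Real.sin (2 * x) * (1 + S x ^ 2 / 2) + Real.cos (2 * x) * (√2 * H x) := by
  have hexp :
      Complex.exp (2 * Complex.I * x) = Real.cos (2 * x) + Real.sin (2 * x) * Complex.I := by
    rw [mul_right_comm, Complex.exp_mul_I]
    push_cast
    rfl
  rw [kJost_eq, hexp]
  simp only [Complex.mul_im, Complex.add_re, Complex.add_im, Complex.ofReal_re, Complex.ofReal_im,
    Complex.mul_re, Complex.I_re, Complex.I_im]
  ring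

theorem kJost_im_ge {x : ℝ} (hx : 0 ≤ x) :
    √2 * (3 * H x ^ 2 * S x ^ 12 + H x ^ 2 * S x ^ 14 - 8 / 3 * H x ^ 4 * S x ^ 9
      - 4 / 3 * H x ^ 4 * S x ^ 11 - 4 * H x ^ 4 * S x ^ 10) ≤ H x * S x ^ 12 * (kJost x).im := by
  obtain ⟨y, rfl⟩ : ∃ y, √2 * y = x := ⟨x / √2, by field_simp⟩
  have hy : 0 ≤ y := nonneg_of_mul_nonneg_right hx (by positivity)
  have hdiv : √2 * y / √2 = y := by field_simp
  have h2 := Real.sq_sqrt zero_le_two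
  have hS := S_pos (√2 * y)
  have hHy : H (√2 * y) ≤ y := by
    rw [H_apply, hdiv]; exact tanh_le_self hy
  have hyS : y * S (√2 * y) ≤ H (√2 * y) := by
    rw [S_apply, H_apply, sech, hdiv, Real.tanh_eq_sinh_div_cosh, mul_one_div]
    exact div_le_div_of_nonneg_right (Real.self_le_sinh_iff.2 hy) (Real.cosh_pos y).le
  have hH := H_nonneg hx
  have hsin := Real.sin_ge_sub_cube (x := 2 * (√2 * y)) (by positivity)
  have hcos := Real.one_sub_sq_div_two_le_cos (x := 2 * (√2 * y))
  rw [kJost_im]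
  set H := H (√2 * y)
  set S := S (√2 * y)
  have hsinS : √2 * (2 * H * S ^ 3 - 8 / 3 * H ^ 3) ≤ Real.sin (2 * (√2 * y)) * S ^ 3 :=
    calc √2 * (2 * H * S ^ 3 - 8 / 3 * H ^ 3)
        ≤ √2 * (2 * y * S ^ 3 - 8 / 3 * (y * S) ^ 3) := by gcongr
      _ = (2 * (√2 * y) - (2 * (√2 * y)) ^ 3 / 6) * S ^ 3 := by
        linear_combination (4 / 3 * √2 * (y * S) ^ 3) * h2
      _ ≤ _ := by gcongr
  have hcosS : S ^ 2 - 4 * H ^ 2 ≤ Real.cos (2 * (√2 * y)) * S ^ 2 :=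
    calc S ^ 2 - 4 * H ^ 2 ≤ S ^ 2 - 4 * (y * S) ^ 2 := by gcongr
      _ = (1 - (2 * (√2 * y)) ^ 2 / 2) * S ^ 2 := by
        linear_combination (2 * (y * S) ^ 2) * h2
      _ ≤ _ := by gcongr
  linear_combination mul_le_mul_of_nonneg_right hsinS
      (by positivity : 0 ≤ H * S ^ 9 * (1 + S ^ 2 / 2))
    + mul_le_mul_of_nonneg_right hcosS (by positivity : 0 ≤ H ^ 2 * S ^ 10 * √2)

theorem deriv_jostMinorant_le {x : ℝ} (hx : 0 ≤ x) :
    2 / 100000 * deriv jostMinorant x ≤ H x * S x ^ 12 * (kJost x).im := by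
  have hcert : (7200000 * H ^ 2 * S ^ 12 + 2400000 * H ^ 2 * S ^ 14 - 6400000 * H ^ 4 * S ^ 9
      - 3200000 * H ^ 4 * S ^ 11 - 9600000 * H ^ 4 * S ^ 10
      - 3 * jostMinorant.D).CertNonneg 0 [1 / 40] 1 := by decide +kernel
  have h := nonneg_of_certNonneg _ hcert hx
  simp only [add_apply, sub_apply, mul_apply, pow_apply, ofNat_apply] at h
  refine le_trans ?_ (kJost_im_ge hx)
  rw [jostMinorant.deriv, ← mul_div_assoc, div_le_iff₀ (by positivity)]
  linear_combination h / 150000 - 8 * (3 * H x ^ 2 * S x ^ 12 + H x ^ 2 * S x ^ 14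
    - 8 / 3 * H x ^ 4 * S x ^ 9 - 4 / 3 * H x ^ 4 * S x ^ 11 - 4 * H x ^ 4 * S x ^ 10)
      * Real.sq_sqrt zero_le_two

theorem abs_source_le {x : ℝ} (hx : 0 ≤ x) : |source x| ≤ 0.2946 * (H x * S x) := by
  have hfactor : source x = (S x - S x ^ 3 - 3 * Real.pi / 32) * (H x * S x) := by
    rw [source]
    linear_combination (H x * S x ^ 2) * H_sq x
  have hS := S_pos x
  have hHS := mul_nonneg (H_nonneg hx) hS.le
  rw [hfactor, abs_mul, abs_of_nonneg hHS]
  refine mul_le_mul_of_nonneg_right (abs_le.2 ⟨?_, ?_⟩) hHS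
  · nlinarith [Real.pi_lt_d20, pow_le_pow_of_le_one hS.le (S_le_one x) (show 1 ≤ 3 by norm_num)]
  · nlinarith [Real.pi_gt_d20, mul_nonneg (sq_nonneg (S x - 0.577)) (by linarith : 0 ≤ S x + 1.154)]

theorem forcing_eq (a b x : ℝ) :
    forcing a x = forcing b x + (a - b) * ((1 - t x ^ 2) * source x) := by
  rw [forcing, forcing]
  ring

section Uniqueness

variable {a x : ℝ} {γ : ℝ → ℝ}

theorem residual_mul_im_kJost_le {s : ℝ} (hs : |s| = 1)
    (hsa : s * (a - 0.68725) = |a - 0.68725|) (hx : 0 ≤ x) :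
    (forcing a x - 0.00001 * (approxSolution.jostOperator x / 128)
        - (a - 0.68725) * 0.0001 * (approxSensitivity.jostOperator x / 128)) * (s * kJost x).im
      ≤ (0.00005 + 0.002 * |a - 0.68725|) * √3 * (H x * S x)
        - |a - 0.68725| * 0.7579 * (2 / 100000) * deriv jostMinorant x := by
  have hmin := mul_le_mul_of_nonneg_left (deriv_jostMinorant_le hx)
    (by positivity : 0 ≤ |a - 0.68725| * 0.7579)
  have hr₁ := abs_forcing_sub_le hx
  have hr₂ := abs_sensitivity_sub_le hx
  have hk := (Complex.abs_im_le_norm _).trans (norm_kJost_le x)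
  rw [Complex.im_ofReal_mul, forcing_eq a 0.68725]
  set d := a - 0.68725
  set r₁ := forcing 0.68725 x - 0.00001 * (approxSolution.jostOperator x / 128)
  set r₂ := (1 - t x ^ 2) * source x - 0.0001 * (approxSensitivity.jostOperator x / 128)
    + 0.7579 * (H x * S x ^ 12)
  have hr : |r₁ + d * r₂| ≤ 0.00005 * (H x * S x) + |d| * (0.002 * (H x * S x)) :=
    (abs_add_le _ _).trans (add_le_add hr₁
      ((abs_mul _ _).trans_le (mul_le_mul_of_nonneg_left hr₂ (abs_nonneg _))))
  have hrk : |s * (r₁ + d * r₂) * (kJost x).im|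
      ≤ (0.00005 * (H x * S x) + |d| * (0.002 * (H x * S x))) * √3 := by
    rw [abs_mul, abs_mul, hs, one_mul]
    exact mul_le_mul hr hk (abs_nonneg _) ((abs_nonneg _).trans hr)
  linear_combination le_of_abs_le hrk + hmin - 0.7579 * (H x * S x ^ 12) * (kJost x).im * hsa

/-- Testing the equation against `Im kJost`, which vanishes at `0`, determines `a`. -/
theorem abs_parameter_sub_le (h : IsDecayingSolution (forcing a) γ) (h0 : γ 0 = 0) :
    |a - 0.68725| ≤ 0.0026 := by
  obtain ⟨s, hs, hsa⟩ : ∃ s : ℝ, |s| = 1 ∧ s * (a - 0.68725) = |a - 0.68725| := by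
    rcases abs_choice (a - 0.68725) with h | h
    · exact ⟨1, by simp, by rw [h, one_mul]⟩
    · exact ⟨-1, by simp, by rw [h, neg_one_mul]⟩
  set d := a - 0.68725
  have hsol := isDecayingSolution (p := approxSolution) (by simp [approxSolution])
  have hsens := isDecayingSolution (p := approxSensitivity) (by simp [approxSensitivity])
  have hlim := ((tendsto_S_atTop.const_mul ((0.00005 + 0.002 * |d|) * √3 * √2)).neg).sub
    (jostMinorant.tendsto_atTop.const_mul (|d| * 0.7579 * (2 / 100000)))
  have hW := ((h.sub (hsol.const_mul 0.00001)).sub (hsens.const_mul (d * 0.0001))).wronskian_le s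
    (fun y => (hasDerivAt_neg_mul_S ((0.00005 + 0.002 * |d|) * √3) y).fun_sub
      ((jostMinorant.differentiable y).hasDerivAt.const_mul (|d| * 0.7579 * (2 / 100000))))
    hlim fun y (hy : 0 < y) => residual_mul_im_kJost_le hs hsa hy.le
  have hfrac : jostMinorant.frac 1 = 3554 := by norm_num [jostMinorant]
  rw [h0, (odd_of_even_eq_nil (p := approxSolution) (by decide +kernel)).map_zero,
    (odd_of_even_eq_nil (p := approxSensitivity) (by decide +kernel)).map_zero,
    (odd_of_even_eq_nil (p := jostMinorant) (by decide +kernel)).map_zero, hfrac,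
    Complex.im_ofReal_mul, Complex.im_ofReal_mul, kJost_zero_im] at hW
  have h6 : √3 * √2 ≤ 2.4495 := by
    rw [← Real.sqrt_mul zero_le_three]
    exact Real.sqrt_le_iff.2 (by norm_num)
  have := mul_le_mul h6 (S_le_one 0) (S_pos 0).le (by norm_num)
  nlinarith [abs_nonneg d]

theorem abs_sub_approxSolution_le (h : IsDecayingSolution (forcing a) γ) (h0 : γ 0 = 0)
    (hx : 0 ≤ x) : |γ x - 0.00001 * approxSolution x| ≤ 0.000578 * S x := by
  have ha := abs_parameter_sub_le h h0
  have hsol := isDecayingSolution (p := approxSolution) (by simp [approxSolution])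
  refine ((h.sub (hsol.const_mul 0.00001)).abs_le (ε := 0.000816) fun y hy => ?_).trans ?_
  · have hy : 0 ≤ y := hx.trans hy.le
    have ht : |1 - t y ^ 2| ≤ 1 := abs_le.2
      ⟨by linarith [t_sq_lt_one (x := y)], by linarith [sq_nonneg (t y)]⟩
    rw [forcing_eq a 0.68725, add_sub_right_comm]
    calc _ ≤ |_| + |(a - 0.68725) * ((1 - t y ^ 2) * source y)| := abs_add_le _ _
      _ ≤ 0.00005 * (H y * S y) + 0.0026 * (1 * (0.2946 * (H y * S y))) := by
        rw [abs_mul, abs_mul]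
        gcongr
        exacts [abs_forcing_sub_le hy, abs_source_le hy]
      _ ≤ 0.000816 * (H y * S y) := by
        linarith [mul_nonneg (H_nonneg hy) (S_pos y).le]
  · have : √2 ≤ 1.4143 := Real.sqrt_le_iff.2 (by norm_num)
    exact mul_le_mul_of_nonneg_right (by linarith) (S_pos x).le

end Uniqueness

end Forcing

section Coupling

/-- Up to a constant factor, a minorant of the primitive of `source * γ` which vanishes at `0`. -/
def energyMinorant : KinkFunction :=
  2085 * H + 7462 * H * S ^ 2 + 181007 * H * S ^ 3 + 9420928 * H * S ^ 4 + 87836517 * H * S ^ 5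
    + 157814247 * H * S ^ 6 + 274233 * H * S ^ 7 - 68936 * H * S ^ 8 - 83424 * t * S ^ 2
    + 127795 * t * S ^ 3 - 20416688 * t * S ^ 4 - 273149542 * t * S ^ 5 - 951642394 * t * S ^ 6
    - 798577634 * t * S ^ 7

/-- Up to a constant factor, a majorant of the primitive of `zetaV ^ 2 * source ^ 2 / S` which
vanishes at `0`. -/
def couplingMajorant : KinkFunction :=
  10115 * H - 92209 * H * S + 188794 * H * S ^ 2 - 10635124 * H * S ^ 3 - 107769049 * H * S ^ 4
    - 209079333 * H * S ^ 5 - 741428 * H * S ^ 6 + 45444 * t * S + 31044 * t * S ^ 2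
    + 20808777 * t * S ^ 3 + 323598529 * t * S ^ 4 + 1217201998 * t * S ^ 5
    + 1063260931 * t * S ^ 6 + 46664 * t ^ 2 * H * S

theorem energyMinorant_cert : ∀ P ∈ [2945243, 2945244],
    (8 * scaledSource P * approxSolution - 1400000000 * S ^ 2
      - 1000000 * energyMinorant.D).CertNonneg 0 [1 / 20] 1 := by decide +kernel

theorem couplingMajorant_cert : ∀ P ∈ [2945243, 2945244],
    (100000000 * couplingMajorant.D - 8 * (1 - t ^ 2) * H ^ 2 * S
      * (10000000 * H ^ 2 * S - (P : ℤ)) ^ 2).CertNonneg 0 [1 / 10] 1 := by decide +kernel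

variable {a x : ℝ} {γ : ℝ → ℝ}

theorem deriv_energyMinorant_le (h : IsDecayingSolution (forcing a) γ) (h0 : γ 0 = 0)
    (hx : 0 ≤ x) : 0.000001 * √2 * deriv energyMinorant x ≤ source x * γ x := by
  have hcert := nonneg_of_pi_approx
    (A := 8 * (H x ^ 3 * S x ^ 2) * approxSolution x - 140 * S x ^ 2 - 0.1 * energyMinorant.D x)
    (B := 8 * (H x * S x) * approxSolution x) fun P hP => by
      have := nonneg_of_certNonneg _ (energyMinorant_cert P hP) hx
      simp only [scaledSource, sub_apply, mul_apply, pow_apply, ofNat_apply, intCast_apply] at this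
      linarith
  have hD := energyMinorant.D_apply x
  have hS := S_pos x
  have herr : |source x * (γ x - 0.00001 * approxSolution x)| ≤ 0.000175 * S x ^ 2 := by
    have hH : H x ≤ 1 := by nlinarith [H_sq x, sq_nonneg (S x)]
    calc _ ≤ 0.2946 * (1 * S x) * (0.000578 * S x) := by
          rw [abs_mul]
          gcongr
          · exact (abs_source_le hx).trans (by gcongr)
          · exact abs_sub_approxSolution_le h h0 hx
      _ ≤ 0.000175 * S x ^ 2 := by nlinarith [sq_nonneg (S x)]
  have hsource : source x * approxSolution x = H x ^ 3 * S x ^ 2 * approxSolution x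
      - 3 * Real.pi / 32 * (H x * S x * approxSolution x) := by rw [source]; ring
  linarith [neg_le_of_abs_le herr]

theorem source_sq_div_S (x : ℝ) :
    source x ^ 2 / S x = H x ^ 2 * S x * (H x ^ 2 * S x - 3 * Real.pi / 32) ^ 2 := by
  have := (S_pos x).ne'
  rw [source]
  field_simp

/-- The integrand is convex in `3 * π / 32`. -/
theorem le_deriv_couplingMajorant (hx : 0 ≤ x) :
    (1 - t x ^ 2) * (source x ^ 2 / S x) ≤ 0.000001 * √2 * deriv couplingMajorant x := by
  have hcert (P : ℤ) (hP : P ∈ [2945243, 2945244]) :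
      0 ≤ 100000000 * couplingMajorant.D x - 8 * (1 - t x ^ 2) * H x ^ 2 * S x
        * (10000000 * H x ^ 2 * S x - P) ^ 2 := by
    have := nonneg_of_certNonneg _ (couplingMajorant_cert P hP) hx
    simpa only [sub_apply, mul_apply, pow_apply, ofNat_apply, intCast_apply, one_apply] using this
  have hlo := hcert 2945243 (by simp)
  have hhi := hcert 2945244 (by simp)
  have hD := couplingMajorant.D_apply x
  have hweight : 0 ≤ 8 * (1 - t x ^ 2) * H x ^ 2 * S x := by
    have := S_pos x
    have := t_sq_lt_one (x := x)
    have : 0 ≤ 1 - t x ^ 2 := by linarith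
    positivity
  rw [source_sq_div_S]
  set c := 3 * Real.pi / 32 with hc
  have hc₁ : 0 ≤ 10000000 * c - 2945243 := by linarith [Real.pi_gt_d20]
  have hc₂ : 0 ≤ 2945244 - 10000000 * c := by linarith [Real.pi_lt_d20]
  push_cast at hlo hhi
  nlinarith [mul_nonneg hc₁ hhi, mul_nonneg hc₂ hlo, mul_nonneg hweight (mul_nonneg hc₁ hc₂)]

theorem KinkFunction.two_mul_frac_one_le_integral {p : KinkFunction} (hp : Function.Odd p)
    {u : ℝ → ℝ} (hu : IntegrableOn u (Ioi 0)) (heven : Function.Even u) {c : ℝ}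
    (h : ∀ x > 0, c * deriv p x ≤ u x) : 2 * (c * p.frac 1) ≤ ∫ x, u x := by
  rw [integral_eq_two_mul_integral_Ioi heven]
  refine mul_le_mul_of_nonneg_left (le_of_tendsto_of_tendsto (p.tendsto_atTop.const_mul c)
    (intervalIntegral_tendsto_integral_Ioi 0 hu tendsto_id) ?_) zero_le_two
  filter_upwards [eventually_ge_atTop 0] with R hR
  have hFTC := intervalIntegral.sub_le_integral_of_hasDeriv_right_of_le hR
    (p.continuous.const_mul c).continuousOn
    (fun x _ => ((p.differentiable x).hasDerivAt.const_mul c).hasDerivWithinAt)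
    (((integrableOn_Ici_iff_integrableOn_Ioi).2 hu).mono_set Icc_subset_Ici_self)
    (fun x hx => h x hx.1)
  rwa [hp.map_zero, mul_zero, sub_zero] at hFTC

theorem source_odd : Function.Odd source := fun x => by
  have hH : H (-x) = -H x := odd_of_even_eq_nil rfl x
  have hS : S (-x) = S x := even_of_odd_eq_nil rfl x
  rw [source, source, hH, hS]
  ring

theorem abs_source_le_S (x : ℝ) : |source x| ≤ S x := by
  have hS : S |x| = S x := by
    rcases abs_choice x with h | h
    · rw [h]
    · rw [h]; exact even_of_odd_eq_nil rfl x
  have habs : |source (|x|)| = |source x| := by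
    rcases abs_choice x with h | h
    · rw [h]
    · rw [h, source_odd, abs_neg]
  have hH : H |x| ≤ 1 := by nlinarith [H_sq |x|, sq_nonneg (S |x|)]
  have hS0 := S_pos x
  rw [← habs]
  refine (abs_source_le (abs_nonneg x)).trans ?_
  rw [hS]
  nlinarith

theorem integrable_source : Integrable source :=
  integrable_S.mono' differentiable_source.continuous.aestronglyMeasurable
    (.of_forall abs_source_le_S)

theorem integrable_coupling : Integrable fun x => (1 - t x ^ 2) * (source x ^ 2 / S x) := by
  refine integrable_S.mono' ?_ (.of_forall fun x => ?_)
  · exact ((continuous_const.sub (t.continuous.pow 2)).mul ((differentiable_source.continuous.pow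
      2).div S.continuous fun x => (S_pos x).ne')).aestronglyMeasurable
  · have hsq : source x ^ 2 / S x ≤ S x :=
      div_le_of_le_mul₀ (S_pos x).le (S_pos x).le
        (by rw [← sq]; exact sq_le_sq' (neg_le_of_abs_le (abs_source_le_S x))
              (le_of_abs_le (abs_source_le_S x)))
    have ht : 0 ≤ 1 - t x ^ 2 := sub_nonneg.2 t_sq_lt_one.le
    have hnonneg := div_nonneg (sq_nonneg (source x)) (S_pos x).le
    rw [Real.norm_of_nonneg (mul_nonneg ht hnonneg)]
    exact (mul_le_of_le_one_left hnonneg (sub_le_self 1 (sq_nonneg _))).trans hsq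

theorem integral_coupling_le :
    ∫ x, (1 - t x ^ 2) * (source x ^ 2 / S x) ≤ 2 * (0.010115 * √2) := by
  have hfrac : couplingMajorant.frac 1 = 10115 := by norm_num [couplingMajorant]
  have heven : Function.Even fun x => -((1 - t x ^ 2) * (source x ^ 2 / S x)) := fun x => by
    have ht : t (-x) = -t x := odd_of_even_eq_nil rfl x
    have hS : S (-x) = S x := even_of_odd_eq_nil rfl x
    simp only [ht, hS, source_odd x, neg_sq]
  have := two_mul_frac_one_le_integral (odd_of_even_eq_nil (p := couplingMajorant)
    (by decide +kernel)) integrable_coupling.neg.integrableOn heven (c := -(0.000001 * √2))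
    fun x hx => by
      rw [neg_mul]
      exact neg_le_neg (le_deriv_couplingMajorant hx.le)
  simp only [hfrac, Pi.neg_apply, integral_neg] at this
  linarith

theorem le_integral_source_mul (h : IsDecayingSolution (forcing a) γ) (hodd : Function.Odd γ) :
    2 * (0.002085 * √2) ≤ ∫ x, source x * γ x := by
  have hfrac : energyMinorant.frac 1 = 2085 := by norm_num [energyMinorant]
  obtain ⟨C, hC⟩ := approxSolution.exists_bound
  have hbound : ∀ᵐ x ∂volume.restrict (Ioi 0), ‖γ x‖ ≤ 0.000578 + 0.00001 * C := by
    refine ae_restrict_of_forall_mem measurableSet_Ioi fun x (hx : 0 < x) => ?_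
    have hγ := abs_le.1 (abs_sub_approxSolution_le h hodd.map_zero hx.le)
    have hp := abs_le.1 (hC x)
    have := S_le_one x
    exact abs_le.2 ⟨by linarith, by linarith⟩
  have hint : IntegrableOn (fun x => source x * γ x) (Ioi 0) :=
    integrable_source.integrableOn.mul_bdd h.differentiable.continuous.aestronglyMeasurable hbound
  have := two_mul_frac_one_le_integral (odd_of_even_eq_nil (p := energyMinorant)
    (by decide +kernel)) hint (fun x => by simp only [source_odd x, hodd x, neg_mul_neg])
    fun x hx => deriv_energyMinorant_le h hodd.map_zero hx.le
  rw [hfrac] at this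
  linarith

theorem coupling_energy_gap (h : IsDecayingSolution (forcing a) γ) (hodd : Function.Odd γ) :
    0.0001 ≤ (∫ x, source x * γ x)
      - 17 / 40 * a ^ 2 * ∫ x, (1 - t x ^ 2) * (source x ^ 2 / S x) := by
  have ha := abs_le.1 (abs_parameter_sub_le h hodd.map_zero)
  have ha2 : a ^ 2 ≤ 0.476 := by nlinarith
  have hs : 1.4 ≤ √2 := Real.le_sqrt_of_sq_le (by norm_num)
  have hM : a ^ 2 * (∫ x, (1 - t x ^ 2) * (source x ^ 2 / S x)) ≤ 0.476 * (2 * (0.010115 * √2)) :=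
    (mul_le_mul_of_nonneg_left integral_coupling_le (sq_nonneg a)).trans
      (mul_le_mul_of_nonneg_right ha2 (by positivity))
  linarith [le_integral_source_mul h hodd]

theorem integrable_mul_zetaV_mul_source {w : ℝ → ℝ} (hw : Continuous w)
    (hw2 : Integrable fun x => w x ^ 2) : Integrable fun x => w x * (zetaV x * source x) := by
  refine integrable_mul_of_integrable_sq hw.aestronglyMeasurable
    (continuous_zetaV.mul differentiable_source.continuous).aestronglyMeasurable hw2
    ((S.integrable_mul integrable_coupling).congr (.of_forall fun x => ?_))
  have := (S_pos x).ne'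
  simp only [mul_pow, zetaV_sq]
  field_simp

theorem coupling_form_nonneg {w : ℝ → ℝ} (hw : Continuous w) (hw2 : Integrable fun x => w x ^ 2)
    {c : ℝ} (hc : 0 < c) (s : ℝ) :
    0 ≤ c * (∫ x, S x * w x ^ 2) + s * (∫ x, w x * (zetaV x * source x))
      + s ^ 2 / (4 * c) * ∫ x, (1 - t x ^ 2) * (source x ^ 2 / S x) := by
  have hS := (S.integrable_mul hw2).const_mul c
  have hX := (integrable_mul_zetaV_mul_source hw hw2).const_mul s
  have hSX : Integrable fun x => c * (S x * w x ^ 2) + s * (w x * (zetaV x * source x)) :=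
    hS.add hX
  have hM := integrable_coupling.const_mul (s ^ 2 / (4 * c))
  rw [← integral_const_mul, ← integral_const_mul, ← integral_const_mul,
    ← integral_add hS hX, ← integral_add hSX hM]
  refine integral_nonneg fun x => ?_
  have hpos := S_pos x
  have hsquare : c * (S x * w x ^ 2) + s * (w x * (zetaV x * source x))
      + s ^ 2 / (4 * c) * ((1 - t x ^ 2) * (source x ^ 2 / S x))
      = (2 * c * S x * w x + s * zetaV x * source x) ^ 2 / (4 * c * S x) := by
    rw [← zetaV_sq]
    field_simp
    ring
  simp only [Pi.zero_apply, hsquare]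
  positivity

end Coupling

theorem deriv_psiV (x : ℝ) : deriv psiV x = 1 - t x ^ 2 := by
  have hpsi : psiV = fun x => 8 * √2 * t x := funext fun x => by rw [psiV, t_apply]
  rw [hpsi, ((hasDerivAt_t x).const_mul (8 * √2)).deriv]
  field_simp

theorem isDecayingSolution_of_eq {a : ℝ} {g : ℝ → ℝ} (hg : Differentiable ℝ g)
    (hg' : Differentiable ℝ (deriv g)) (hlim : Tendsto g atTop (𝓝 0))
    (hlim' : Tendsto (deriv g) atTop (𝓝 0))
    (hgeq : ∀ x, -deriv (deriv g) x - 4 * g x - 3 * sech (x / √2) ^ 2 * g x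
      = psiV x * deriv fsrc x + (a + 1 / 2) * deriv psiV x * fsrc x) :
    IsDecayingSolution (forcing a) (fun x => fsrcScale⁻¹ * g x) := by
  have hsol : IsDecayingSolution (fun x => fsrcScale * forcing a x) g := by
    refine ⟨hg, hg', fun x => ?_, hlim, hlim'⟩
    have hderiv : deriv fsrc x = fsrcScale * deriv source x := by
      rw [funext fsrc_eq, deriv_const_mul _ (differentiable_source x)]
    have := hgeq x
    rw [hderiv, deriv_psiV, fsrc_eq, psiV, ← t_apply, ← S_apply] at this
    rw [forcing]
    linear_combination -this
  simpa only [inv_mul_cancel_left₀ fsrcScale_pos.ne'] using hsol.const_mul fsrcScale⁻¹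

theorem coercivity_Dsharp_general {a : ℝ} {g : ℝ → ℝ} (hodd : Function.Odd g)
    (hg : Differentiable ℝ g) (hg' : Differentiable ℝ (deriv g)) (hlim : Tendsto g atTop (𝓝 0))
    (hlim' : Tendsto (deriv g) atTop (𝓝 0))
    (hgeq : ∀ x, -deriv (deriv g) x - 4 * g x - 3 * sech (x / √2) ^ 2 * g x
      = psiV x * deriv fsrc x + (a + 1 / 2) * deriv psiV x * fsrc x) :
    ∃ κ > 0, ∀ (α : ℝ) (w : ℝ → ℝ), Function.Odd w → Differentiable ℝ w →
      Integrable (fun x => w x ^ 2) → Integrable (fun x => deriv w x ^ 2) →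
      ∫ x, w x * Z1 x = 0 →
      (∫ x, (deriv w x ^ 2 - Vpot x * w x ^ 2)) + a * α * (∫ x, w x * zetaV x * fsrc x)
        + α ^ 2 * (∫ x, fsrc x * g x) ≥ κ * (α ^ 2 + ∫ x, deriv w x ^ 2) := by
  refine ⟨0.0001, by norm_num, fun α w hwodd hw hw2 hw'2 horth => ?_⟩
  have hvirial := virial_coercivity hwodd hw hw2 hw'2 horth
  have hcross := coupling_form_nonneg hw.continuous hw2 (c := 10 / 17) (by norm_num)
    (a * α * fsrcScale)
  have hgap := mul_le_mul_of_nonneg_left (coupling_energy_gap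
    (isDecayingSolution_of_eq hg hg' hlim hlim' hgeq) fun x => by simp only [hodd x, mul_neg])
    (sq_nonneg (fsrcScale * α))
  have hX : ∫ x, w x * zetaV x * fsrc x = fsrcScale * ∫ x, w x * (zetaV x * source x) := by
    simp only [fsrc_eq, ← integral_const_mul]; congr with x; ring
  have hΓ : ∫ x, fsrc x * g x = fsrcScale ^ 2 * ∫ x, source x * (fsrcScale⁻¹ * g x) := by
    have := fsrcScale_pos.ne'
    simp only [fsrc_eq, ← integral_const_mul]; congr with x; field_simp
  have hP : 0 ≤ ∫ x, deriv w x ^ 2 := integral_nonneg fun x => sq_nonneg _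
  rw [mul_pow, fsrcScale_sq] at hgap hcross
  rw [hX, hΓ, fsrcScale_sq, ge_iff_le]
  linear_combination hgap + hcross + hvirial / 1.02 + (1 / 51 - 0.0001) * hP
    + (81 / 32 - 1) * 0.0001 * sq_nonneg α

theorem coercivity_Dsharp
    (hFGR : (∫ x : ℝ, deriv psiV x * fsrc x * (kJost x).im) ≠ 0)
    (a : ℝ)
    (ha : a = -(∫ x : ℝ, (psiV x * deriv fsrc x + (1 / 2) * deriv psiV x * fsrc x) * (kJost x).im)
          / (∫ x : ℝ, deriv psiV x * fsrc x * (kJost x).im))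
    (g : ℝ → ℝ)
    (hgodd : ∀ x : ℝ, g (-x) = -g x)
    (hgschwartz : ∃ S : SchwartzMap ℝ ℝ, ∀ x : ℝ, S x = g x)
    (hgeq : ∀ x : ℝ, -(deriv (deriv g)) x - 4 * g x - 3 * sech (x / Real.sqrt 2) ^ 2 * g x
        = psiV x * deriv fsrc x + (a + 1 / 2) * deriv psiV x * fsrc x) :
    ∃ κ > 0, ∀ (α : ℝ) (w : ℝ → ℝ),
      (∀ x : ℝ, w (-x) = -w x) →
      Differentiable ℝ w →
      Integrable (fun x => (w x) ^ 2) →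
      Integrable (fun x => (deriv w x) ^ 2) →
      (∫ x : ℝ, w x * Z1 x) = 0 →
      (∫ x : ℝ, ((deriv w x) ^ 2 - Vpot x * (w x) ^ 2))
          + a * α * (∫ x : ℝ, w x * zetaV x * fsrc x)
          + α ^ 2 * (∫ x : ℝ, fsrc x * g x)
        ≥ κ * (α ^ 2 + ∫ x : ℝ, (deriv w x) ^ 2) := by
  obtain ⟨S, hS⟩ := hgschwartz
  obtain rfl : ⇑S = g := funext hS
  have hderiv : deriv S = SchwartzMap.derivCLM ℝ ℝ S := rfl
  have htendsto (f : SchwartzMap ℝ ℝ) := f.tendsto_cocompact.mono_left atTop_le_cocompact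
  exact coercivity_Dsharp_general hgodd S.differentiable
    (hderiv ▸ SchwartzMap.differentiable _) (htendsto S) (hderiv ▸ htendsto _) hgeq
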